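/- Let φ(z) = (az + b)/(cz + d) be a fractional linear map (with a, b, c, d complex, (c,d) ≠ (0,0)) sending the unit disk D into D, i.e. satisfying |a|² + |b|² + 2|āb − c̄d| ≤ |c|² + |d|² and |c| ≤ |d|. Then, for the composition operator C_φ on the Hardy space H², the limit β(C_φ) = lim_{n→∞} [a_n(C_φ)]^{1/n} exists and β(C_φ) = exp(−1/capa(K)), where K is the closure of φ(D) and capa(K) is its Green capacity in D. -/

import Mathlib

/-!
For a nonconstant symbol, `φ(D)` is a Euclidean disk contained in `D`. If its closure lies in `D`,
it is also a pseudo-hyperbolic disk: it equals `psi α` of the disk of radius `ρ` about `0`, for an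
automorphism `psi α` of `D` and some `ρ < 1` (`geom_interior`). If it is tangent to the unit
circle, it contains pseudo-hyperbolic disks of every radius `ρ < 1` (`geom_boundary`), and the
formula below is used with `ρ = 1`. In both cases the two sides of the claim equal `ρ`.

* *Capacity.* By conformal invariance (`greenFnE_psi`), `V` of the pseudo-hyperbolic disk is `V` of
  the disk of radius `ρ`, namely `-log ρ`. The uniform measure on the circle of radius `ρ` has this
  energy (`greenV_le`). Conversely, for `R > ρ` the Green function of `D` dominates `-log R` plus a
  positive definite kernel on the disk of radius `ρ` (`greenFnE_ge`, `integral_greenTerm_nonneg`),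
  so every energy is at least `-log R` (`greenV_ge`).
* *Approximation numbers.* In the coordinate given by `psi (-α)`, composition with `φ` followed by
  composition with a suitable map of `D` into a smaller disk is multiplication of the `k`-th Taylor
  coefficient by `ρ' ^ k`, for any `ρ' < ρ`; this bounds `a_n` from below by a multiple of
  `ρ' ^ n / n` (`approxNumber_lower`). Truncating the Taylor series of `f ∘ psi α` bounds `a_n`
  from above by a multiple of `(ρ / s) ^ n`, for any `s` in `(ρ, 1)` (`approxNumber_upper`); in the
  tangent case the trivial bound `a_n ≤ ‖C_φ‖` suffices.

Both operator bounds rest on the fact that bounded analytic functions lie in `H²`, with norm at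
most their sup norm (`memH2_of_bound`), and on the bound `‖f‖ / (1 - s)` for `f` in `H²` on the disk
of radius `s` (`norm_le_of_memH2`).

For a constant symbol, `K` is a point, `V(K) = ∞`, and the operator has rank at most one.
-/

open MeasureTheory Set Filter
open scoped ENNReal NNReal

noncomputable section

/-- The open unit disk in the complex plane. -/
def unitDisk : Set ℂ := {z : ℂ | ‖z‖ < 1}

/-- The Green function of the unit disk, `g(z,w) = log |(1 - w̄ z)/(z - w)|`,
with value `⊤` on the diagonal. -/
def greenFnE (z w : ℂ) : ℝ≥0∞ :=
  if z = w then ⊤ else ENNReal.ofReal (Real.log ‖(1 - (starRingEnd ℂ) w * z) / (z - w)‖)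

/-- The Green energy `I(μ) = ∬ g(z,w) dμ(z) dμ(w)` of a measure. -/
def greenEnergy (μ : Measure ℂ) : ℝ≥0∞ := ∫⁻ z, ∫⁻ w, greenFnE z w ∂μ ∂μ

/-- `greenV E = V(E)`: the infimum of energies of probability measures supported by a
compact subset of `E`. -/
def greenV (E : Set ℂ) : ℝ≥0∞ :=
  ⨅ (μ : Measure ℂ) (_ : IsProbabilityMeasure μ)
    (_ : ∃ K : Set ℂ, K ⊆ E ∧ IsCompact K ∧ μ Kᶜ = 0), greenEnergy μ

/-- The Green capacity `capa(E) = 1/V(E)` of `E` in the unit disk. -/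
def greenCapa (E : Set ℂ) : ℝ≥0∞ := (greenV E)⁻¹

/-- `e^{-1/capa(E)} = e^{-V(E)}`, with the value `0` when `V(E) = ∞` (i.e. `capa(E) = 0`). -/
def expNegV (E : Set ℂ) : ℝ :=
  if greenV E = ⊤ then 0 else Real.exp (-(greenV E).toReal)

/-- The pseudo-hyperbolic distance on the unit disk. -/
def pseudoDist (z w : ℂ) : ℝ := ‖(z - w) / (1 - (starRingEnd ℂ) z * w)‖

/-- The pseudo-hyperbolic diameter of a set. -/
def pseudoDiam (E : Set ℂ) : ℝ :=
  sSup {d : ℝ | ∃ z ∈ E, ∃ w ∈ E, d = pseudoDist z w}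

/-- The `n`-th approximation number `a_n(T) = inf {‖T - R‖ : rank R < n}`. -/
def approxNumber {E F : Type*} [NormedAddCommGroup E] [NormedAddCommGroup F]
    [NormedSpace ℂ E] [NormedSpace ℂ F] (T : E →L[ℂ] F) (n : ℕ) : ℝ :=
  sInf {c : ℝ | ∃ R : E →L[ℂ] F,
    Module.rank ℂ (LinearMap.range (R : E →ₗ[ℂ] F)) < (n : Cardinal) ∧ c = ‖T - R‖}

/-- The squared norm `‖f‖² = |f(0)|² + ∫_D |f'|² ω dA` (normalized area measure) of the
weighted analytic Hilbert space `H_ω`. -/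
def hwNormSq (ω : ℝ → ℝ) (f : ℂ → ℂ) : ℝ :=
  ‖f 0‖ ^ 2 + (∫ z in unitDisk, ‖deriv f z‖ ^ 2 * ω ‖z‖) / Real.pi

/-- Membership in the weighted analytic Hilbert space `H_ω`. -/
def memHw (ω : ℝ → ℝ) (f : ℂ → ℂ) : Prop :=
  DifferentiableOn ℂ f unitDisk ∧
    IntegrableOn (fun z => ‖deriv f z‖ ^ 2 * ω ‖z‖) unitDisk

/-- The coefficient weights `w_0 = 1`, `w_n = 2 n² ∫_0^1 r^{2n-1} ω(r) dr`. -/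
def wcoef (ω : ℝ → ℝ) (n : ℕ) : ℝ :=
  if n = 0 then 1 else 2 * (n : ℝ) ^ 2 * ∫ r in (0:ℝ)..1, r ^ (2 * n - 1) * ω r

/-- Taylor coefficient of `f` at `0`. -/
def taylorCoeff (f : ℂ → ℂ) (n : ℕ) : ℂ := iteratedDeriv n f 0 / (n.factorial : ℂ)

/-- `(1/2π) ∫_0^{2π} |f(r e^{it})|^p dt`. -/
def hpMean (p : ℝ) (f : ℂ → ℂ) (r : ℝ) : ℝ :=
  (1 / (2 * Real.pi)) *
    ∫ t in (0:ℝ)..(2 * Real.pi), ‖f ((r : ℂ) * Complex.exp ((t : ℂ) * Complex.I))‖ ^ p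

/-- The `H^p` norm. -/
def hpNorm (p : ℝ) (f : ℂ → ℂ) : ℝ :=
  sSup {m : ℝ | ∃ r ∈ Set.Ioo (0:ℝ) 1, m = hpMean p f r ^ (1 / p)}

/-- Membership in the Hardy space `H^p`. -/
def memHp (p : ℝ) (f : ℂ → ℂ) : Prop :=
  DifferentiableOn ℂ f unitDisk ∧
    BddAbove {m : ℝ | ∃ r ∈ Set.Ioo (0:ℝ) 1, m = hpMean p f r ^ (1 / p)}

/-- The squared `H²` norm `‖f‖² = Σ |b_n|²` in terms of Taylor coefficients. -/
def h2NormSq (f : ℂ → ℂ) : ℝ := ∑' n : ℕ, ‖taylorCoeff f n‖ ^ 2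

/-- Membership in the Hardy space `H²`. -/
def memH2 (f : ℂ → ℂ) : Prop :=
  DifferentiableOn ℂ f unitDisk ∧ Summable (fun n : ℕ => ‖taylorCoeff f n‖ ^ 2)

/-- The `n`-th Kolmogorov number. -/
def kolmogorovNumber {E F : Type*} [NormedAddCommGroup E] [NormedAddCommGroup F]
    [NormedSpace ℂ E] [NormedSpace ℂ F] (T : E →L[ℂ] F) (n : ℕ) : ℝ :=
  ⨅ (S : Submodule ℂ F) (_ : Module.rank ℂ S < (n : Cardinal)),
    ⨆ x : {x : E // ‖x‖ ≤ 1}, Metric.infDist (T (x : E)) (S : Set F)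

/-- The `n`-th Gelfand number: infimum of norms of restrictions of `T` to closed
subspaces of codimension `< n`. -/
def gelfandNumber {X : Type*} [NormedAddCommGroup X] [NormedSpace ℂ X]
    (T : X →L[ℂ] X) (n : ℕ) : ℝ :=
  ⨅ (F : Submodule ℂ X) (_ : IsClosed (F : Set X))
    (_ : Module.rank ℂ (X ⧸ F) < (n : Cardinal)),
    ⨆ x : {x : X // x ∈ F ∧ ‖x‖ ≤ 1}, ‖T (x : X)‖

/-- `ε_n(T) = inf_{dim E < n} sup_{x ∈ B_X} dist (T x, T(E))`. -/
def epsApprox {X : Type*} [NormedAddCommGroup X] [NormedSpace ℂ X]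
    (T : X →L[ℂ] X) (n : ℕ) : ℝ :=
  ⨅ (E : Submodule ℂ X) (_ : Module.rank ℂ E < (n : Cardinal)),
    ⨆ x : {x : X // ‖x‖ ≤ 1}, Metric.infDist (T (x : X)) (T '' (E : Set X))

/-! ### Bounded analytic functions and the Hardy space -/

section Hardy

instance factTwoPi : Fact (0 < 2 * Real.pi) := ⟨Real.two_pi_pos⟩

/-- Bessel's inequality on the circle of radius `r`: the coefficients of a power series bounded
by `M` are controlled through the `L²` norm of the boundary function `∑ a k r ^ k e^{ikt}`. -/
theorem sum_sq_le_of_circle {a : ℕ → ℂ} {f : ℂ → ℂ} {M : ℝ} (hM : 0 ≤ M)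
    (hf : ∀ z : ℂ, ‖z‖ < 1 → HasSum (fun k => a k * z ^ k) (f z))
    (hb : ∀ z : ℂ, ‖z‖ < 1 → ‖f z‖ ≤ M) {r : ℝ} (hr0 : 0 ≤ r) (hr : r < 1) (N : ℕ) :
    ∑ k ∈ Finset.range N, (‖a k‖ * r ^ k) ^ 2 ≤ M ^ 2 := by
  have hsum : Summable fun k => ‖a k * (r : ℂ) ^ k‖ :=
    (hf r (by simpa [abs_of_nonneg hr0] using hr)).summable.norm
  set T := 2 * Real.pi
  have hsC : Summable fun k : ℕ => (a k * (r : ℂ) ^ k) • (fourier (k : ℤ) : C(AddCircle T, ℂ)) := by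
    refine Summable.of_norm ?_
    simpa [norm_smul, fourier_norm] using hsum
  obtain ⟨F, hF⟩ := hsC
  have hFn : ‖F‖ ≤ M := by
    refine (ContinuousMap.norm_le _ hM).2 fun x => ?_
    have h1 : HasSum (fun k : ℕ => a k * ((r : ℂ) * (AddCircle.toCircle x : ℂ)) ^ k) (F x) := by
      have := (ContinuousMap.evalCLM ℂ x).hasSum hF
      have he : (fun k : ℕ => a k * ((r : ℂ) * (AddCircle.toCircle x : ℂ)) ^ k) =
          fun k : ℕ => ContinuousMap.evalCLM ℂ x
            ((a k * (r : ℂ) ^ k) • (fourier (k : ℤ) : C(AddCircle T, ℂ))) := by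
        funext k
        simp [fourier_apply, AddCircle.toCircle_nsmul, mul_pow, mul_assoc]
      rw [he]
      exact this
    have hz : ‖(r : ℂ) * (AddCircle.toCircle x : ℂ)‖ < 1 := by
      simpa [abs_of_nonneg hr0, Circle.norm_coe] using hr
    rw [h1.unique (hf _ hz)]
    exact hb _ hz
  -- Haar measure on the circle is a probability measure, so the `L²` norm is at most the sup norm.
  set L := ContinuousMap.toLp (E := ℂ) 2 (AddCircle.haarAddCircle (T := T)) ℂ
  have hLn : ‖L F‖ ≤ M := by
    have := ContinuousMap.toLp_norm_le (p := 2) (μ := AddCircle.haarAddCircle (T := T)) (E := ℂ) (𝕜 := ℂ)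
    have h2 := L.le_of_opNorm_le this F
    simp [measureUnivNNReal] at h2
    exact h2.trans hFn
  have hL : HasSum (fun k : ℕ => (a k * (r : ℂ) ^ k) • (fourierLp (T := T) 2 (k : ℤ))) (L F) := by
    simpa [Function.comp_def, fourierLp] using L.hasSum hF
  have hin : ∀ j : ℕ, inner ℂ (fourierLp (T := T) 2 (j : ℤ)) (L F) = a j * (r : ℂ) ^ j := by
    intro j
    have h3 := (innerSL ℂ (fourierLp (T := T) 2 (j : ℤ))).hasSum hL
    have he : (fun k : ℕ => innerSL ℂ (fourierLp (T := T) 2 (j : ℤ))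
        ((a k * (r : ℂ) ^ k) • (fourierLp (T := T) 2 (k : ℤ)))) =
        fun k => if k = j then a j * (r : ℂ) ^ j else 0 := by
      funext k
      have ho := orthonormal_iff_ite.1 (orthonormal_fourier (T := T)) (j : ℤ) (k : ℤ)
      rw [map_smul, innerSL_apply_apply, ho]
      by_cases hk : k = j
      · simp [hk]
      · have hjk : ¬ j = k := fun h => hk h.symm
        simp [hk, hjk]
    have h4 : HasSum (fun k => if k = j then a j * (r : ℂ) ^ j else 0)
        (innerSL ℂ (fourierLp (T := T) 2 (j : ℤ)) (L F)) := he ▸ h3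
    exact h4.unique (hasSum_ite_eq j _)
  have hbes := (orthonormal_fourier (T := T)).sum_inner_products_le (L F)
    (s := (Finset.range N).map ⟨fun k : ℕ => (k : ℤ), Nat.cast_injective⟩)
  simp only [Finset.sum_map, Function.Embedding.coeFn_mk, hin, norm_mul, norm_pow,
    Complex.norm_real, Real.norm_eq_abs, abs_of_nonneg hr0] at hbes
  exact hbes.trans (pow_le_pow_left₀ (norm_nonneg _) hLn 2)

/-- Bessel's inequality for a bounded power series, from the circles of radius `r → 1`. -/
theorem sum_sq_le {a : ℕ → ℂ} {f : ℂ → ℂ} {M : ℝ} (hM : 0 ≤ M)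
    (hf : ∀ z : ℂ, ‖z‖ < 1 → HasSum (fun k => a k * z ^ k) (f z))
    (hb : ∀ z : ℂ, ‖z‖ < 1 → ‖f z‖ ≤ M) (N : ℕ) :
    ∑ k ∈ Finset.range N, ‖a k‖ ^ 2 ≤ M ^ 2 := by
  have hc : ContinuousWithinAt (fun r : ℝ => ∑ k ∈ Finset.range N, (‖a k‖ * r ^ k) ^ 2) (Set.Iio 1) 1 := by
    apply Continuous.continuousWithinAt
    fun_prop
  have := le_of_tendsto hc.tendsto (b := M ^ 2) (by
    filter_upwards [Ioo_mem_nhdsLT (show (0:ℝ) < 1 by norm_num)] with r hr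
    exact sum_sq_le_of_circle hM hf hb hr.1.le hr.2 N)
  simpa using this

theorem unitDisk_eq_ball : unitDisk = Metric.ball (0:ℂ) 1 := by
  ext z; simp [unitDisk]

theorem hasSum_taylorCoeff {f : ℂ → ℂ} (hf : DifferentiableOn ℂ f unitDisk) {z : ℂ} (hz : ‖z‖ < 1) :
    HasSum (fun k => taylorCoeff f k * z ^ k) (f z) := by
  rw [unitDisk_eq_ball] at hf
  have := Complex.hasSum_taylorSeries_on_ball (c := 0) (r := 1) (f := f) (z := z) (by simpa using hf)
    (by simpa using hz)
  have he : (fun k => taylorCoeff f k * z ^ k) =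
      fun k : ℕ => ((k.factorial : ℂ)⁻¹) • (z - 0) ^ k • iteratedDeriv k f 0 := by
    funext k
    simp only [taylorCoeff, sub_zero, smul_eq_mul]
    ring
  rw [he]
  exact this

/-- A bounded analytic function on the disk lies in `H²`, with norm at most its sup norm. -/
theorem memH2_of_bound {f : ℂ → ℂ} {M : ℝ} (hM : 0 ≤ M) (hf : DifferentiableOn ℂ f unitDisk)
    (hb : ∀ z : ℂ, ‖z‖ < 1 → ‖f z‖ ≤ M) : memH2 f ∧ h2NormSq f ≤ M ^ 2 := by
  have hN := sum_sq_le hM (fun z hz => hasSum_taylorCoeff hf hz) hb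
  have hs : Summable (fun n : ℕ => ‖taylorCoeff f n‖ ^ 2) :=
    summable_of_sum_range_le (fun _ => by positivity) hN
  exact ⟨⟨hf, hs⟩, Real.tsum_le_of_sum_range_le (fun _ => by positivity) hN⟩

/-- Sup norm of an `H²` function on a smaller disk is controlled by the `H²` norm. -/
theorem norm_le_of_memH2 {f : ℂ → ℂ} (hf : memH2 f) {N : ℝ} (hN0 : 0 ≤ N) (hN : h2NormSq f ≤ N ^ 2)
    {s : ℝ} (hs : s < 1) {z : ℂ} (hz : ‖z‖ ≤ s) : ‖f z‖ ≤ N / (1 - s) := by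
  have hs0 : 0 ≤ s := (norm_nonneg z).trans hz
  have hk : ∀ k, ‖taylorCoeff f k‖ ≤ N := fun k =>
    abs_le_of_sq_le_sq' ((hf.2.le_tsum k fun _ _ => by positivity).trans hN) hN0 |>.2
  have h1 := hasSum_taylorCoeff hf.1 (hz.trans_lt hs)
  have h2 : HasSum (fun k => N * s ^ k) (N * (1 - s)⁻¹) :=
    (hasSum_geometric_of_lt_one hs0 hs).mul_left N
  rw [← h1.tsum_eq, div_eq_mul_inv]
  refine tsum_of_norm_bounded h2 fun k => ?_
  rw [norm_mul, norm_pow]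
  gcongr
  exact hk k

end Hardy

/-! ### Disk automorphisms and pseudo-hyperbolic disks -/

section Moebius

/-- The disk automorphism `z ↦ (z + α) / (1 + ᾱ z)`; its inverse is `psi (-α)`. -/
def psi (α z : ℂ) : ℂ := (z + α) / (1 + (starRingEnd ℂ) α * z)

theorem psi_den_ne {α z : ℂ} (hα : ‖α‖ < 1) (hz : ‖z‖ ≤ 1) : 1 + (starRingEnd ℂ) α * z ≠ 0 := by
  intro h
  have h1 : ‖(starRingEnd ℂ) α * z‖ = 1 := by
    rw [eq_neg_of_add_eq_zero_right h]; simp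
  rw [norm_mul, RCLike.norm_conj] at h1
  nlinarith [norm_nonneg α, norm_nonneg z]

theorem one_sub_normSq_pos {α : ℂ} (hα : ‖α‖ < 1) : (1 - α * (starRingEnd ℂ) α) ≠ 0 := by
  rw [Complex.mul_conj, Complex.normSq_eq_norm_sq]
  intro h
  have : (1 : ℝ) - ‖α‖ ^ 2 = 0 := by exact_mod_cast h
  nlinarith [norm_nonneg α]

theorem psi_neg_psi {α z : ℂ} (hα : ‖α‖ < 1) (hz : ‖z‖ ≤ 1) : psi (-α) (psi α z) = z := by
  have h1 := psi_den_ne hα hz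
  have h2 := one_sub_normSq_pos hα
  have h3 : 1 + (starRingEnd ℂ) (-α) * psi α z =
      (1 - α * (starRingEnd ℂ) α) / (1 + (starRingEnd ℂ) α * z) := by
    rw [psi, map_neg]
    obtain ⟨D, hD⟩ : ∃ D, D = 1 + (starRingEnd ℂ) α * z := ⟨_, rfl⟩
    rw [← hD] at h1 ⊢
    field_simp; rw [hD]; ring
  have h4 : psi α z + -α = (1 - α * (starRingEnd ℂ) α) * z / (1 + (starRingEnd ℂ) α * z) := by
    rw [psi]
    obtain ⟨D, hD⟩ : ∃ D, D = 1 + (starRingEnd ℂ) α * z := ⟨_, rfl⟩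
    rw [← hD] at h1 ⊢
    field_simp; rw [hD]; ring
  have : psi (-α) (psi α z) = (psi α z + -α) / (1 + (starRingEnd ℂ) (-α) * psi α z) := rfl
  rw [this, h3, h4, div_div_div_cancel_right₀ h1, mul_div_cancel_left₀ _ h2]

/-- The Schwarz–Pick identity behind the invariance of the Green function. -/
theorem one_sub_psi {α z w : ℂ} (hα : ‖α‖ < 1) (hz : ‖z‖ ≤ 1) (hw : ‖w‖ ≤ 1) :
    1 - (starRingEnd ℂ) (psi α w) * psi α z =
      (1 - α * (starRingEnd ℂ) α) * (1 - (starRingEnd ℂ) w * z) /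
        ((starRingEnd ℂ) (1 + (starRingEnd ℂ) α * w) * (1 + (starRingEnd ℂ) α * z)) := by
  have h1 := psi_den_ne hα hz
  have h2 : (starRingEnd ℂ) (1 + (starRingEnd ℂ) α * w) ≠ 0 := by
    simpa only [ne_eq, map_eq_zero] using psi_den_ne hα hw
  rw [psi, psi, map_div₀]
  simp only [map_add, map_one, map_mul, Complex.conj_conj] at h2 ⊢
  obtain ⟨D, hD⟩ : ∃ D, D = 1 + (starRingEnd ℂ) α * z := ⟨_, rfl⟩
  obtain ⟨E, hE⟩ : ∃ E, E = 1 + α * (starRingEnd ℂ) w := ⟨_, rfl⟩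
  rw [← hD] at h1 ⊢
  rw [← hE] at h2 ⊢
  field_simp
  rw [hD, hE]
  ring

theorem psi_sub_psi {α z w : ℂ} (hα : ‖α‖ < 1) (hz : ‖z‖ ≤ 1) (hw : ‖w‖ ≤ 1) :
    psi α z - psi α w = (1 - α * (starRingEnd ℂ) α) * (z - w) /
        ((1 + (starRingEnd ℂ) α * w) * (1 + (starRingEnd ℂ) α * z)) := by
  have h1 := psi_den_ne hα hz
  have h2 := psi_den_ne hα hw
  rw [psi, psi]
  obtain ⟨D, hD⟩ : ∃ D, D = 1 + (starRingEnd ℂ) α * z := ⟨_, rfl⟩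
  obtain ⟨E, hE⟩ : ∃ E, E = 1 + (starRingEnd ℂ) α * w := ⟨_, rfl⟩
  rw [← hD] at h1 ⊢
  rw [← hE] at h2 ⊢
  field_simp
  rw [hD, hE]
  ring

theorem norm_psi_lt {α z : ℂ} (hα : ‖α‖ < 1) (hz : ‖z‖ < 1) : ‖psi α z‖ < 1 := by
  have h := one_sub_psi hα hz.le hz.le
  have hr : (1 : ℝ) - ‖psi α z‖ ^ 2 =
      (1 - ‖α‖ ^ 2) * (1 - ‖z‖ ^ 2) / ‖1 + (starRingEnd ℂ) α * z‖ ^ 2 := by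
    rw [mul_comm, Complex.mul_conj, Complex.mul_conj, mul_comm _ z, Complex.mul_conj,
      mul_comm _ (1 + _), Complex.mul_conj] at h
    simp only [Complex.normSq_eq_norm_sq] at h
    exact_mod_cast h
  have h0 : 0 < ‖1 + (starRingEnd ℂ) α * z‖ := norm_pos_iff.2 (psi_den_ne hα hz.le)
  have : 0 < (1 - ‖α‖ ^ 2) * (1 - ‖z‖ ^ 2) / ‖1 + (starRingEnd ℂ) α * z‖ ^ 2 := by
    have := norm_nonneg α
    have := norm_nonneg z
    apply div_pos (mul_pos _ _) (by positivity) <;> nlinarith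
  nlinarith [norm_nonneg (psi α z)]

theorem differentiableAt_psi {α z : ℂ} (hα : ‖α‖ < 1) (hz : ‖z‖ ≤ 1) :
    DifferentiableAt ℂ (psi α) z := by
  have h1 := psi_den_ne hα hz
  unfold psi
  fun_prop (disch := assumption)

theorem psi_injOn {α z w : ℂ} (hα : ‖α‖ < 1) (hz : ‖z‖ ≤ 1) (hw : ‖w‖ ≤ 1)
    (h : psi α z = psi α w) : z = w := by
  rw [← psi_neg_psi hα hz, h, psi_neg_psi hα hw]

/-- Conformal invariance of the Green function. It extends to boundary points, because the
formula for the kernel makes sense there. -/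
theorem greenFnE_psi {α z w : ℂ} (hα : ‖α‖ < 1) (hz : ‖z‖ ≤ 1) (hw : ‖w‖ ≤ 1) :
    greenFnE (psi α z) (psi α w) = greenFnE z w := by
  unfold greenFnE
  by_cases h : z = w
  · simp [h]
  · rw [if_neg h, if_neg fun h' => h (psi_injOn hα hz hw h'), one_sub_psi hα hz hw,
      psi_sub_psi hα hz hw]
    congr 2
    have h1 := norm_ne_zero_iff.2 (psi_den_ne hα hz)
    have h2 := norm_ne_zero_iff.2 (psi_den_ne hα hw)
    have h3 := norm_ne_zero_iff.2 (one_sub_normSq_pos hα)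
    have h4 : ‖z - w‖ ≠ 0 := norm_ne_zero_iff.2 (sub_ne_zero.2 h)
    simp only [norm_div, norm_mul, RCLike.norm_conj]
    field_simp

/-- The identity showing that the pseudo-hyperbolic disk of centre `x e` and radius `ρ` is the
Euclidean disk of centre `k e` and radius `r`, when `k` and `r` satisfy the relations `h1`, `h2`. -/
theorem pseudoDisk_identity {e z : ℂ} (he : ‖e‖ = 1) {x ρ k r A : ℝ} (hA : A = 1 - ρ ^ 2 * x ^ 2)
    (h1 : x * (1 - ρ ^ 2) = k * A) (h2 : x ^ 2 - ρ ^ 2 = A * (k ^ 2 - r ^ 2)) :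
    ‖z - x * e‖ ^ 2 - ρ ^ 2 * ‖1 - (starRingEnd ℂ) (x * e) * z‖ ^ 2 =
      A * (‖z - k * e‖ ^ 2 - r ^ 2) := by
  have he' : e.re * e.re + e.im * e.im = 1 := by
    have := Complex.normSq_eq_norm_sq e
    rw [he, Complex.normSq_apply] at this
    linarith
  simp only [← Complex.normSq_eq_norm_sq, Complex.normSq_apply]
  simp
  have h3 : e.im * e.im = 1 - e.re * e.re := by linarith
  linear_combination (-2 * (z.re * e.re + z.im * e.im)) * h1 + h2 +
    (x ^ 2 - A * k ^ 2 - ρ^2 * x^2 * (z.re^2+z.im^2)) * he' - (z.re^2+z.im^2)* hA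

/-- The equality `|psi (-α) (psi α u)| = |u|` with its denominator cleared. -/
theorem norm_psi_neg_sub {α u : ℂ} (hα : ‖α‖ < 1) (hu : ‖u‖ ≤ 1) :
    ‖psi α u - α‖ = ‖u‖ * ‖1 - (starRingEnd ℂ) α * psi α u‖ := by
  have h := psi_neg_psi hα hu
  have h1 : 1 - (starRingEnd ℂ) α * psi α u ≠ 0 := by
    have h1 := psi_den_ne hα hu
    have h2 := one_sub_normSq_pos hα
    have h3 : 1 - (starRingEnd ℂ) α * psi α u =
      (1 - α * (starRingEnd ℂ) α) / (1 + (starRingEnd ℂ) α * u) := by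
      rw [psi]
      obtain ⟨D, hD⟩ : ∃ D, D = 1 + (starRingEnd ℂ) α * u := ⟨_, rfl⟩
      rw [← hD] at h1 ⊢
      field_simp; rw [hD]; ring
    rw [h3]
    exact div_ne_zero h2 h1
  have h2 : psi α u - α = u * (1 - (starRingEnd ℂ) α * psi α u) := by
    have : psi (-α) (psi α u) = (psi α u - α) / (1 - (starRingEnd ℂ) α * psi α u) := by
      simp [psi, sub_eq_add_neg]
    rw [this, div_eq_iff h1] at h
    exact h
  rw [← norm_mul, ← h2]

theorem exists_unit (C : ℂ) : ∃ e : ℂ, ‖e‖ = 1 ∧ C = (‖C‖ : ℝ) * e := by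
  by_cases h : C = 0
  · exact ⟨1, by simp, by simp [h]⟩
  · refine ⟨C / (‖C‖ : ℝ), ?_, ?_⟩
    · have := norm_ne_zero_iff.2 h
      simp [this]
    · have : ((‖C‖ : ℝ) : ℂ) ≠ 0 := by exact_mod_cast norm_ne_zero_iff.2 h
      field_simp

/-- Inclusion of a pseudo-hyperbolic disk in the Euclidean disk provided by
`pseudoDisk_identity`. -/
theorem psi_mem_ball {e : ℂ} (he : ‖e‖ = 1) {x ρ k r : ℝ} (hx0 : 0 ≤ x) (hx1 : x < 1)
    (hρ0 : 0 < ρ) (hρ1 : ρ < 1) (hr : 0 < r)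
    (h1 : x * (1 - ρ ^ 2) = k * (1 - ρ ^ 2 * x ^ 2))
    (h2 : x ^ 2 - ρ ^ 2 = (1 - ρ ^ 2 * x ^ 2) * (k ^ 2 - r ^ 2)) {u : ℂ} (hu : ‖u‖ < ρ) :
    psi (x * e) u ∈ Metric.ball (k * e) r := by
  have hα : ‖(x : ℂ) * e‖ < 1 := by simpa [he, abs_of_nonneg hx0] using hx1
  have hid := pseudoDisk_identity he (z := psi (x * e) u) rfl h1 h2
  have hA : 0 < 1 - ρ ^ 2 * x ^ 2 := by nlinarith [mul_nonneg hρ0.le hx0, mul_lt_one_of_nonneg_of_lt_one_left hρ0.le hρ1 hx1.le]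
  have h3 := norm_psi_neg_sub hα (hu.le.trans hρ1.le)
  have h4 : ‖psi (x * e) u - x * e‖ ^ 2 ≤
      ρ ^ 2 * ‖1 - (starRingEnd ℂ) (x * e) * psi (x * e) u‖ ^ 2 := by
    rw [h3, mul_pow]; gcongr
  have h5 : ‖psi (x * e) u - x * e‖ ^ 2 <
      ρ ^ 2 * ‖1 - (starRingEnd ℂ) (x * e) * psi (x * e) u‖ ^ 2 := by
    refine lt_of_le_of_ne h4 fun h => ?_
    rw [h3, mul_pow] at h
    have h0 : ‖1 - (starRingEnd ℂ) (x * e) * psi (x * e) u‖ ≠ 0 := by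
      refine norm_ne_zero_iff.2 ?_
      have := psi_den_ne (α := -(x * e)) (by simpa using hα) (norm_psi_lt hα (hu.trans hρ1)).le
      simpa [sub_eq_add_neg] using this
    have h6 : ‖u‖ ^ 2 = ρ ^ 2 := mul_right_cancel₀ (pow_ne_zero 2 h0) h
    nlinarith [norm_nonneg u]
  have h6 : ‖psi (x * e) u - k * e‖ ^ 2 - r ^ 2 < 0 := by
    by_contra hc
    push Not at hc
    have := mul_nonneg hA.le hc
    linarith
  rw [mem_ball_iff_norm]
  exact lt_of_pow_lt_pow_left₀ 2 hr.le (by linarith)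

/-- A closed disk contained in the unit disk is a pseudo-hyperbolic disk: an automorphism carries
it onto a disk centred at `0`. -/
theorem geom_interior {C : ℂ} {r : ℝ} (hr : 0 < r) (hC : ‖C‖ + r < 1) :
    ∃ (ρ : ℝ) (α : ℂ), 0 < ρ ∧ ρ < 1 ∧ ‖α‖ < 1 ∧
      (∀ u : ℂ, ‖u‖ < ρ → psi α u ∈ Metric.ball C r) ∧
      ∀ z ∈ Metric.closedBall C r, ‖psi (-α) z‖ ≤ ρ := by
  obtain ⟨e, he, hCe⟩ := exists_unit C
  set k := ‖C‖
  have hk0 : 0 ≤ k := norm_nonneg C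
  set M := 1 + k ^ 2 - r ^ 2
  have hM : 2 * k < M := by simp only [M]; nlinarith
  set S := Real.sqrt (M ^ 2 - 4 * k ^ 2)
  have hS0 : 0 ≤ S := Real.sqrt_nonneg _
  have hS : S ^ 2 = M ^ 2 - 4 * k ^ 2 := Real.sq_sqrt (by nlinarith)
  have hMS : 0 < M + S := by linarith
  -- The smaller root of `k x² - M x + k = 0`, written so that `k = 0` is allowed.
  obtain ⟨x, hx⟩ : ∃ x, x = 2 * k / (M + S) := ⟨_, rfl⟩
  have hx0 : 0 ≤ x := by rw [hx]; positivity
  have hxM : x * (M + S) = 2 * k := by rw [hx]; field_simp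
  have hx1 : x < 1 := by rw [hx, div_lt_one hMS]; linarith
  have hq : k * x ^ 2 - M * x + k = 0 := by
    have : (k * x ^ 2 - M * x + k) * (M + S) ^ 2 = 0 := by
      have : k * (x * (M + S)) ^ 2 - M * (x * (M + S)) * (M + S) + k * (M + S) ^ 2 = 0 := by
        rw [hxM]; linear_combination k * hS
      linear_combination this
    exact (mul_eq_zero.1 this).resolve_right (by positivity)
  have hp : 0 < 1 - x * (k + r) := by nlinarith
  -- The endpoints `k + r` and `k - r` of the diameter are sent to `ρ` and `-ρ`.
  obtain ⟨ρ, hρ⟩ : ∃ ρ, ρ = (k + r - x) / (1 - x * (k + r)) := ⟨_, rfl⟩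
  have hE1 : k + r - x = ρ * (1 - x * (k + r)) := by
    rw [hρ, div_mul_cancel₀ _ hp.ne']
  have hq' : 0 < 1 - x * (k - r) := by nlinarith
  have hE2 : x - (k - r) = ρ * (1 - x * (k - r)) := by
    rw [hρ, div_mul_eq_mul_div, eq_div_iff hp.ne']
    linear_combination (-2) * hq
  have hρ1 : ρ < 1 := by
    rw [hρ, div_lt_one hp]; nlinarith
  have hρ0 : 0 < ρ := by
    have : ρ * (1 - k * x) = r := by linarith
    by_contra h
    nlinarith
  have h1 : x * (1 - ρ ^ 2) = k * (1 - ρ ^ 2 * x ^ 2) := by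
    have : (x * (1 - ρ ^ 2) - k * (1 - ρ ^ 2 * x ^ 2)) * r = 0 := by
      have e1 : (k + r - x) ^ 2 = (ρ * (1 - x * (k + r))) ^ 2 := by rw [hE1]
      have e2 : (x - (k - r)) ^ 2 = (ρ * (1 - x * (k - r))) ^ 2 := by rw [hE2]
      linear_combination (-1/4) * (e1 - e2)
    linarith [(mul_eq_zero.1 this).resolve_right hr.ne']
  have h2 : x ^ 2 - ρ ^ 2 = (1 - ρ ^ 2 * x ^ 2) * (k ^ 2 - r ^ 2) := by
    have e1 : (k + r - x) ^ 2 = (ρ * (1 - x * (k + r))) ^ 2 := by rw [hE1]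
    have e2 : (x - (k - r)) ^ 2 = (ρ * (1 - x * (k - r))) ^ 2 := by rw [hE2]
    linear_combination (1/2) * (e1 + e2) + 2 * k * h1
  have hα : ‖(x : ℂ) * e‖ < 1 := by simpa [he, abs_of_nonneg hx0] using hx1
  refine ⟨ρ, x * e, hρ0, hρ1, hα, ?_, ?_⟩
  · intro u hu
    rw [hCe]
    exact psi_mem_ball he hx0 hx1 hρ0 hρ1 hr h1 h2 hu
  · intro z hz
    have hA : 0 < 1 - ρ ^ 2 * x ^ 2 := by nlinarith [mul_nonneg hρ0.le hx0, mul_lt_one_of_nonneg_of_lt_one_left hρ0.le hρ1 hx1.le]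
    have hid := pseudoDisk_identity he (z := z) rfl h1 h2
    rw [mem_closedBall_iff_norm] at hz
    have hz1 : ‖z‖ ≤ 1 := by
      calc ‖z‖ = ‖(z - C) + C‖ := by simp
        _ ≤ ‖z - C‖ + ‖C‖ := norm_add_le _ _
        _ ≤ 1 := by linarith
    have hd : 0 < ‖1 - (starRingEnd ℂ) (x * e) * z‖ := by
      refine norm_pos_iff.2 ?_
      have := psi_den_ne (α := -(x * e)) (by simpa using hα) hz1
      simpa [sub_eq_add_neg] using this
    have h4 : ‖z - x * e‖ ^ 2 ≤ ρ ^ 2 * ‖1 - (starRingEnd ℂ) (x * e) * z‖ ^ 2 := by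
      rw [← hCe] at hid
      have : ‖z - C‖ ^ 2 ≤ r ^ 2 := by gcongr
      nlinarith
    have h5 : psi (-(x * e)) z = (z - x * e) / (1 - (starRingEnd ℂ) (x * e) * z) := by
      simp [psi, sub_eq_add_neg]
    rw [h5, norm_div, div_le_iff₀ hd]
    exact le_of_sq_le_sq (by rwa [mul_pow]) (by positivity)

/-- A disk internally tangent to the unit circle contains pseudo-hyperbolic disks of every radius
`ρ < 1`, with centres close to the point of tangency. -/
theorem geom_boundary {C : ℂ} {r : ℝ} (hr : 0 < r) (hC : ‖C‖ + r = 1) {ρ : ℝ} (hρ0 : 0 < ρ)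
    (hρ1 : ρ < 1) : ∃ α : ℂ, ‖α‖ < 1 ∧ ∀ u : ℂ, ‖u‖ < ρ → psi α u ∈ Metric.ball C r := by
  obtain ⟨e, he, hCe⟩ := exists_unit C
  set k := ‖C‖
  have hk0 : 0 ≤ k := norm_nonneg C
  have hρ2 : 0 < 1 - ρ ^ 2 := by nlinarith
  -- With this `x`, the Euclidean centre `k'` of the pseudo-hyperbolic disk satisfies `k ≤ k'`, and
  -- `k' + r' < 1 = k + r` then gives the inclusion.
  obtain ⟨x, hx⟩ : ∃ x, x = 1 - (1 - k) * (1 - ρ ^ 2) / 2 := ⟨_, rfl⟩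
  have hx1 : x < 1 := by
    have : 0 < (1 - k) * (1 - ρ ^ 2) := mul_pos (by linarith) hρ2
    linarith
  have hx0 : 0 ≤ x := by
    have : (1 - k) * (1 - ρ ^ 2) ≤ 1 := by nlinarith
    linarith
  have hA : 0 < 1 - ρ ^ 2 * x ^ 2 := by nlinarith [mul_nonneg hρ0.le hx0, mul_lt_one_of_nonneg_of_lt_one_left hρ0.le hρ1 hx1.le]
  have hα : ‖(x : ℂ) * e‖ < 1 := by simpa [he, abs_of_nonneg hx0] using hx1
  have hx2 : 0 < 1 - x ^ 2 := by nlinarith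
  obtain ⟨k', hk'⟩ : ∃ k', k' = x * (1 - ρ ^ 2) / (1 - ρ ^ 2 * x ^ 2) := ⟨_, rfl⟩
  obtain ⟨r', hr'⟩ : ∃ r', r' = ρ * (1 - x ^ 2) / (1 - ρ ^ 2 * x ^ 2) := ⟨_, rfl⟩
  have hkA : k' * (1 - ρ ^ 2 * x ^ 2) = x * (1 - ρ ^ 2) := by
    rw [hk', div_mul_cancel₀ _ hA.ne']
  have hrA : r' * (1 - ρ ^ 2 * x ^ 2) = ρ * (1 - x ^ 2) := by
    rw [hr', div_mul_cancel₀ _ hA.ne']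
  have hkk : k ≤ k' := by
    rw [hk', le_div_iff₀ hA]
    have hy : 1 - x = (1 - k) * (1 - ρ ^ 2) / 2 := by rw [hx]; ring
    have hy0 : 0 < 1 - x := by linarith
    have hk1 : k < 1 := by linarith
    have b1 : (1 - x) * (1 - ρ ^ 2 + 2 * k * ρ ^ 2) ≤ (1 - x) * 2 := by
      gcongr
      nlinarith [sq_nonneg ρ]
    nlinarith [mul_nonneg hk0 (sq_nonneg (ρ * (1 - x)))]
  have hkr : k' + r' < 1 := by
    rw [hk', hr', ← add_div, div_lt_one hA]
    nlinarith [mul_pos (mul_pos (sub_pos.2 hx1) (sub_pos.2 hρ1)) (show 0 < 1 - ρ * x by nlinarith)]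
  have hr'0 : 0 < r' := by rw [hr']; positivity
  refine ⟨x * e, hα, fun u hu => ?_⟩
  have h2 : x ^ 2 - ρ ^ 2 = (1 - ρ ^ 2 * x ^ 2) * (k' ^ 2 - r' ^ 2) := by
    have : (x ^ 2 - ρ ^ 2) * (1 - ρ ^ 2 * x ^ 2) = (k' * (1 - ρ ^ 2 * x ^ 2)) ^ 2 - (r' * (1 - ρ ^ 2 * x ^ 2)) ^ 2 := by
      rw [hkA, hrA]; ring
    refine mul_right_cancel₀ hA.ne' ?_
    linear_combination this
  have := psi_mem_ball he hx0 hx1 hρ0 hρ1 hr'0 hkA.symm h2 hu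
  rw [mem_ball_iff_norm] at this ⊢
  have h3 : psi (x * e) u - C = (psi (x * e) u - k' * e) + (((k' - k : ℝ) : ℂ) * e) := by
    rw [hCe]; push_cast; ring
  have h4 : ‖(((k' - k : ℝ) : ℂ) * e)‖ = k' - k := by
    rw [norm_mul, he, Complex.norm_real, Real.norm_eq_abs, abs_of_nonneg (by linarith), mul_one]
  calc _ ≤ _ := h3 ▸ norm_add_le _ _
    _ < r := by rw [h4]; linarith

end Moebius

/-! ### Green energy of disks -/

section Green

theorem measurable_greenFnE : Measurable fun p : ℂ × ℂ => greenFnE p.1 p.2 := by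
  unfold greenFnE
  refine Measurable.ite (measurableSet_eq_fun measurable_fst measurable_snd) measurable_const ?_
  fun_prop

/-- The Green function of the disk of radius `ρ` is nonnegative on that closed disk. -/
theorem norm_sub_le_green {u v : ℂ} {ρ : ℝ} (hρ : 0 < ρ) (hu : ‖u‖ ≤ ρ) (hv : ‖v‖ ≤ ρ) :
    ‖u - v‖ ≤ ρ * ‖1 - (starRingEnd ℂ) v * u / (ρ : ℂ) ^ 2‖ := by
  have hρ' : (ρ : ℂ) ≠ 0 := by exact_mod_cast hρ.ne'
  have h1 : ρ * ‖1 - (starRingEnd ℂ) v * u / (ρ : ℂ) ^ 2‖ =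
      ‖(ρ : ℂ) ^ 2 - (starRingEnd ℂ) v * u‖ / ρ := by
    have : 1 - (starRingEnd ℂ) v * u / (ρ : ℂ) ^ 2 = ((ρ : ℂ) ^ 2 - (starRingEnd ℂ) v * u) / (ρ : ℂ) ^ 2 := by
      field_simp
    rw [this, norm_div, norm_pow, Complex.norm_real, Real.norm_eq_abs, abs_of_pos hρ]
    field_simp
  rw [h1, le_div_iff₀ hρ]
  refine le_of_sq_le_sq ?_ (norm_nonneg _)
  have h2 : ‖(ρ : ℂ) ^ 2 - (starRingEnd ℂ) v * u‖ ^ 2 - (‖u - v‖ * ρ) ^ 2 =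
      (ρ ^ 2 - ‖u‖ ^ 2) * (ρ ^ 2 - ‖v‖ ^ 2) := by
    have hre : ((ρ : ℂ) ^ 2).re = ρ ^ 2 := by rw [← Complex.ofReal_pow, Complex.ofReal_re]
    have him : ((ρ : ℂ) ^ 2).im = 0 := by rw [← Complex.ofReal_pow, Complex.ofReal_im]
    rw [mul_pow]
    simp only [← Complex.normSq_eq_norm_sq, Complex.normSq_apply, Complex.sub_re, Complex.sub_im,
      Complex.mul_re, Complex.mul_im, hre, him, Complex.conj_re, Complex.conj_im]
    ring
  have h3 : 0 ≤ ρ ^ 2 - ‖u‖ ^ 2 := by nlinarith [norm_nonneg u]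
  have h4 : 0 ≤ ρ ^ 2 - ‖v‖ ^ 2 := by nlinarith [norm_nonneg v]
  nlinarith [mul_nonneg h3 h4]

/-- The `n`-th term in the expansion of `log |1 - v̄ u| - log |1 - v̄ u / R²|`, which is the Green
function of the unit disk, minus that of the disk of radius `R`, plus `log R`. For `n = 0` the
division by zero gives the correct value `0`. -/
def greenTerm (R : ℝ) (n : ℕ) (u v : ℂ) : ℝ :=
  ((R ^ 2)⁻¹ ^ n - 1) / n * (u ^ n * (starRingEnd ℂ) v ^ n).re

theorem hasSum_greenTerm {u v : ℂ} {R : ℝ} (hR0 : 0 < R) (hR1 : R < 1) (hu : ‖u‖ < R) (hv : ‖v‖ < R) :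
    HasSum (fun n => greenTerm R n u v)
      (Real.log ‖1 - (starRingEnd ℂ) v * u‖ -
        Real.log ‖1 - (starRingEnd ℂ) v * u / (R : ℂ) ^ 2‖) := by
  have hx : ‖(starRingEnd ℂ) v * u‖ < R ^ 2 := by
    rw [norm_mul, RCLike.norm_conj]
    nlinarith [norm_nonneg u, norm_nonneg v]
  have hx1 : ‖(starRingEnd ℂ) v * u‖ < 1 := by nlinarith
  have hx2 : ‖(starRingEnd ℂ) v * u / (R : ℂ) ^ 2‖ < 1 := by
    rw [norm_div, norm_pow, Complex.norm_real, Real.norm_eq_abs, abs_of_pos hR0,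
      div_lt_one (by positivity)]
    exact hx
  have h1 := Complex.hasSum_re (Complex.hasSum_taylorSeries_neg_log hx1)
  have h2 := Complex.hasSum_re (Complex.hasSum_taylorSeries_neg_log hx2)
  simp only [Complex.neg_re, Complex.log_re] at h1 h2
  have h3 := h2.sub h1
  rw [neg_sub_neg] at h3
  have he : (fun n => greenTerm R n u v) = fun n : ℕ =>
      (((starRingEnd ℂ) v * u / (R : ℂ) ^ 2) ^ n / (n : ℂ)).re -
        (((starRingEnd ℂ) v * u) ^ n / (n : ℂ)).re := by
    funext n
    have e1 : ((starRingEnd ℂ) v * u / (R : ℂ) ^ 2) ^ n / (n : ℂ) =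
        (((R ^ 2)⁻¹ ^ n / n : ℝ) : ℂ) * (u ^ n * (starRingEnd ℂ) v ^ n) := by
      push_cast
      rw [div_eq_mul_inv ((starRingEnd ℂ) v * u), mul_pow, mul_pow]
      ring
    have e2 : ((starRingEnd ℂ) v * u) ^ n / (n : ℂ) =
        ((1 / n : ℝ) : ℂ) * (u ^ n * (starRingEnd ℂ) v ^ n) := by
      push_cast
      rw [mul_pow]
      ring
    rw [e1, e2, Complex.re_ofReal_mul, Complex.re_ofReal_mul, greenTerm]
    ring
  rw [he]
  exact h3

/-- Dropping the (nonnegative) Green function of the disk of radius `R` leaves a lower bound with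
the smooth kernel `-log R + ∑ greenTerm`. -/
theorem greenFnE_ge {u v : ℂ} {R : ℝ} (hR0 : 0 < R) (hR1 : R < 1) (hu : ‖u‖ < R) (hv : ‖v‖ < R) :
    ENNReal.ofReal (-Real.log R + ∑' n, greenTerm R n u v) ≤ greenFnE u v := by
  unfold greenFnE
  split_ifs with h
  · exact le_top
  have hx : ‖(starRingEnd ℂ) v * u‖ < R ^ 2 := by
    rw [norm_mul, RCLike.norm_conj]
    nlinarith [norm_nonneg u, norm_nonneg v]
  have hx1 : ‖(starRingEnd ℂ) v * u‖ < 1 := by nlinarith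
  have h1 : 0 < ‖1 - (starRingEnd ℂ) v * u‖ := by
    refine norm_pos_iff.2 fun h0 => ?_
    rw [← sub_eq_zero.1 h0] at hx1
    simp at hx1
  have hle := norm_sub_le_green hR0 hu.le hv.le
  have h2 : 0 < ‖u - v‖ := norm_pos_iff.2 (sub_ne_zero.2 h)
  have h3 : 0 < ‖1 - (starRingEnd ℂ) v * u / (R : ℂ) ^ 2‖ := by
    by_contra h0
    nlinarith
  apply ENNReal.ofReal_le_ofReal
  rw [(hasSum_greenTerm hR0 hR1 hu hv).tsum_eq, norm_div, Real.log_div h1.ne' h2.ne']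
  have := Real.log_le_log h2 hle
  rw [Real.log_mul hR0.ne' h3.ne'] at this
  linarith

theorem abs_greenTerm_le {u v : ℂ} {R ρ : ℝ} (hR0 : 0 < R) (hR1 : R < 1)
    (hu : ‖u‖ ≤ ρ) (hv : ‖v‖ ≤ ρ) (n : ℕ) : |greenTerm R n u v| ≤ (ρ ^ 2 / R ^ 2) ^ n := by
  have hRi : 1 ≤ (R ^ 2)⁻¹ := (one_le_inv₀ (by positivity)).2 (by nlinarith)
  have hRn : 1 ≤ (R ^ 2)⁻¹ ^ n := one_le_pow₀ hRi
  have h1 : |((R ^ 2)⁻¹ ^ n - 1) / n| ≤ (R ^ 2)⁻¹ ^ n := by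
    rw [abs_of_nonneg (by have := sub_nonneg.2 hRn; positivity)]
    rcases Nat.eq_zero_or_pos n with rfl | hn
    · simp
    · rw [div_le_iff₀ (by positivity)]
      have : (1 : ℝ) ≤ n := by exact_mod_cast hn
      nlinarith
  have h2 : |(u ^ n * (starRingEnd ℂ) v ^ n).re| ≤ (ρ ^ 2) ^ n := by
    refine (Complex.abs_re_le_norm _).trans ?_
    have hρ0 : 0 ≤ ρ := (norm_nonneg u).trans hu
    rw [norm_mul, norm_pow, norm_pow, RCLike.norm_conj, ← mul_pow, sq]
    gcongr
  have h3 : (ρ ^ 2 / R ^ 2) ^ n = (R ^ 2)⁻¹ ^ n * (ρ ^ 2) ^ n := by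
    rw [← mul_pow, div_eq_mul_inv, mul_comm]
  rw [greenTerm, abs_mul, h3]
  exact mul_le_mul h1 h2 (abs_nonneg _) (by positivity)

theorem ofReal_integral_le_lintegral {X : Type*} [MeasurableSpace X] {μ : Measure X} {f : X → ℝ}
    (hf : Integrable f μ) : ENNReal.ofReal (∫ x, f x ∂μ) ≤ ∫⁻ x, ENNReal.ofReal (f x) ∂μ := by
  have h1 : ∫ x, f x ∂μ ≤ ∫ x, max (f x) 0 ∂μ :=
    integral_mono hf hf.pos_part fun x => le_max_left _ _
  refine (ENNReal.ofReal_le_ofReal h1).trans ?_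
  rw [ofReal_integral_eq_lintegral_ofReal hf.pos_part (ae_of_all _ fun x => le_max_right _ _)]
  refine lintegral_mono fun x => ?_
  simp

/-- The double integral of each term is a nonnegative multiple of the squared modulus of a moment. -/
theorem integral_greenTerm_nonneg {μ : Measure ℂ} [IsProbabilityMeasure μ] {χ : ℂ → ℂ}
    {R : ℝ} (hR0 : 0 < R) (hR1 : R < 1) (hχ : Measurable χ) {ρ : ℝ} (hb : ∀ z, ‖χ z‖ ≤ ρ) (n : ℕ) :
    0 ≤ ∫ p : ℂ × ℂ, greenTerm R n (χ p.1) (χ p.2) ∂(μ.prod μ) := by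
  have hRi : 1 ≤ (R ^ 2)⁻¹ := (one_le_inv₀ (by positivity)).2 (by nlinarith)
  have hRn : 0 ≤ (R ^ 2)⁻¹ ^ n - 1 := sub_nonneg.2 (one_le_pow₀ hRi)
  simp only [greenTerm]
  rw [integral_const_mul]
  refine mul_nonneg (by positivity) ?_
  have hF_int : Integrable (fun p : ℂ × ℂ => χ p.1 ^ n * (starRingEnd ℂ) (χ p.2) ^ n) (μ.prod μ) := by
    have hc : Measurable fun w : ℂ => (starRingEnd ℂ) w := RCLike.continuous_conj.measurable
    have hm : Measurable fun p : ℂ × ℂ => χ p.1 ^ n * (starRingEnd ℂ) (χ p.2) ^ n :=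
      ((hχ.comp measurable_fst).pow_const n).mul
        ((hc.comp (hχ.comp measurable_snd)).pow_const n)
    refine Integrable.of_bound hm.aestronglyMeasurable (ρ ^ n * ρ ^ n) (ae_of_all _ fun p => ?_)
    rw [norm_mul, norm_pow, norm_pow, RCLike.norm_conj]
    have hρ0 : 0 ≤ ρ := (norm_nonneg _).trans (hb 0)
    gcongr <;> exact hb _
  have h1 := integral_re hF_int
  simp only [RCLike.re_to_complex] at h1
  rw [h1, integral_prod_mul (fun z => χ z ^ n) (fun z => (starRingEnd ℂ) (χ z) ^ n)]
  have h2 : ∫ z, (starRingEnd ℂ) (χ z) ^ n ∂μ = (starRingEnd ℂ) (∫ z, χ z ^ n ∂μ) := by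
    rw [← integral_conj]; simp
  rw [h2, Complex.mul_conj]
  simpa using Complex.normSq_nonneg _

/-- Every measure carried by the disk of radius `ρ < R` has energy at least `-log R`: the kernel
`-log R + ∑ greenTerm` is a constant plus a positive definite kernel. -/
theorem energy_ge_core {μ : Measure ℂ} [IsProbabilityMeasure μ] {χ : ℂ → ℂ} (hχ : Measurable χ)
    {ρ R : ℝ} (hb : ∀ z, ‖χ z‖ ≤ ρ) (hρR : ρ < R) (hR1 : R < 1) :
    ENNReal.ofReal (-Real.log R) ≤ ∫⁻ z, ∫⁻ w, greenFnE (χ z) (χ w) ∂μ ∂μ := by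
  have hρ0 : 0 ≤ ρ := (norm_nonneg _).trans (hb 0)
  have hR0 : 0 < R := hρ0.trans_lt hρR
  set F : ℕ → ℂ × ℂ → ℝ := fun n p => greenTerm R n (χ p.1) (χ p.2)
  have hFm : ∀ n, Measurable (F n) := fun n => by
    simp only [F, greenTerm]; fun_prop
  have hFb : ∀ n p, ‖F n p‖ ≤ (ρ ^ 2 / R ^ 2) ^ n := fun n p =>
    abs_greenTerm_le hR0 hR1 (hb _) (hb _) n
  have hq : ρ ^ 2 / R ^ 2 < 1 := by rw [div_lt_one (by positivity)]; nlinarith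
  have hgeo : Summable fun n : ℕ => (ρ ^ 2 / R ^ 2) ^ n :=
    summable_geometric_of_lt_one (by positivity) hq
  have hFi : ∀ n, Integrable (F n) (μ.prod μ) := fun n =>
    Integrable.of_bound (hFm n).aestronglyMeasurable _ (ae_of_all _ (hFb n))
  have hsm : Summable fun n => ∫ p, ‖F n p‖ ∂(μ.prod μ) := by
    refine Summable.of_nonneg_of_le (fun n => integral_nonneg fun _ => norm_nonneg _) (fun n => ?_) hgeo
    refine (integral_mono (hFi n).norm (integrable_const _) (hFb n)).trans ?_
    simp
  have hsum := hasSum_integral_of_summable_integral_norm hFi hsm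
  have hnn : 0 ≤ ∫ p, ∑' n, F n p ∂(μ.prod μ) :=
    hsum.nonneg fun n => integral_greenTerm_nonneg hR0 hR1 hχ hb n
  have hSm : Measurable fun p => ∑' n, F n p := Measurable.tsum hFm
  have hSi : Integrable (fun p => ∑' n, F n p) (μ.prod μ) := by
    refine Integrable.of_bound hSm.aestronglyMeasurable (∑' n : ℕ, (ρ ^ 2 / R ^ 2) ^ n)
      (ae_of_all _ fun p => ?_)
    exact tsum_of_norm_bounded hgeo.hasSum fun n => hFb n p
  have hHi : Integrable (fun p => -Real.log R + ∑' n, F n p) (μ.prod μ) :=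
    (integrable_const _).add hSi
  calc ENNReal.ofReal (-Real.log R)
      ≤ ENNReal.ofReal (∫ p, (-Real.log R + ∑' n, F n p) ∂(μ.prod μ)) := by
        apply ENNReal.ofReal_le_ofReal
        rw [integral_add (integrable_const _) hSi]
        simpa using hnn
    _ ≤ ∫⁻ p, ENNReal.ofReal (-Real.log R + ∑' n, F n p) ∂(μ.prod μ) :=
        ofReal_integral_le_lintegral hHi
    _ = ∫⁻ z, ∫⁻ w, ENNReal.ofReal (-Real.log R + ∑' n, F n (z, w)) ∂μ ∂μ :=
        lintegral_prod _ (by fun_prop)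
    _ ≤ _ := lintegral_mono fun z => lintegral_mono fun w =>
        greenFnE_ge hR0 hR1 ((hb z).trans_lt hρR) ((hb w).trans_lt hρR)

theorem measurable_psi (α : ℂ) : Measurable (psi α) := by unfold psi; fun_prop

/-- Lower bound for `V` of a subset of the pseudo-hyperbolic disk of centre `α` and radius `ρ`. -/
theorem greenV_ge {K : Set ℂ} {α : ℂ} (hα : ‖α‖ < 1) {ρ : ℝ} (hρ0 : 0 < ρ) (hρ1 : ρ < 1)
    (hK1 : ∀ z ∈ K, ‖z‖ ≤ 1) (hK : ∀ z ∈ K, ‖psi (-α) z‖ ≤ ρ) :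
    ENNReal.ofReal (-Real.log ρ) ≤ greenV K := by
  have hlim : Tendsto (fun R : ℝ => ENNReal.ofReal (-Real.log R)) (nhdsWithin ρ (Set.Ioi ρ))
      (nhds (ENNReal.ofReal (-Real.log ρ))) := by
    refine (ENNReal.tendsto_ofReal ?_).mono_left nhdsWithin_le_nhds
    exact (Real.continuousAt_log hρ0.ne').neg.tendsto
  refine le_of_tendsto hlim ?_
  filter_upwards [Ioo_mem_nhdsGT hρ1] with R hR
  refine le_iInf fun μ => le_iInf fun hμ => le_iInf fun ⟨K', hK'K, _, hK'0⟩ => ?_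
  -- `psi (-α)` is cut off outside `E` to make it globally bounded; this is invisible to `μ`.
  set E : Set ℂ := {z | ‖psi (-α) z‖ ≤ ρ}
  have hE : MeasurableSet E := measurableSet_le (measurable_psi _).norm measurable_const
  have hb : ∀ z, ‖E.indicator (psi (-α)) z‖ ≤ ρ := by
    intro z
    by_cases hz : z ∈ E
    · rw [Set.indicator_of_mem hz]; exact hz
    · rw [Set.indicator_of_notMem hz]; simpa using hρ0.le
  have hae : ∀ᵐ z ∂μ, z ∈ K := by
    have : ∀ᵐ z ∂μ, z ∈ K' := by
      rw [ae_iff]; exact hK'0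
    exact this.mono fun z hz => hK'K hz
  refine (energy_ge_core (μ := μ) ((measurable_psi (-α)).indicator hE) hb hR.1 hR.2).trans
    (le_of_eq ?_)
  refine lintegral_congr_ae (hae.mono fun z hz => ?_)
  refine lintegral_congr_ae (hae.mono fun w hw => ?_)
  change greenFnE (E.indicator (psi (-α)) z) (E.indicator (psi (-α)) w) = greenFnE z w
  have hz' : z ∈ E := hK z hz
  have hw' : w ∈ E := hK w hw
  rw [Set.indicator_of_mem hz', Set.indicator_of_mem hw']
  exact greenFnE_psi (by simpa using hα) (hK1 z hz) (hK1 w hw)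

/-- The uniform probability measure on `(0, 2π]`. -/
def angleMeasure : Measure ℝ :=
  ENNReal.ofReal (2 * Real.pi)⁻¹ • (volume.restrict (Set.Ioc 0 (2 * Real.pi)))

instance : IsProbabilityMeasure angleMeasure := ⟨by
  rw [angleMeasure, Measure.smul_apply, Measure.restrict_apply_univ, Real.volume_Ioc, sub_zero,
    smul_eq_mul, ← ENNReal.ofReal_mul (by positivity), inv_mul_cancel₀ (by positivity),
    ENNReal.ofReal_one]⟩

theorem integral_angleMeasure (f : ℂ → ℝ) (ρ : ℝ) :
    ∫ t, f (circleMap 0 ρ t) ∂angleMeasure = Real.circleAverage f 0 ρ := by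
  rw [angleMeasure, integral_smul_measure, Real.circleAverage,
    intervalIntegral.integral_of_le (by positivity), ENNReal.toReal_ofReal (by positivity)]

theorem integrable_angleMeasure {f : ℂ → ℝ} {ρ : ℝ} (hf : CircleIntegrable f 0 ρ) :
    Integrable (fun t => f (circleMap 0 ρ t)) angleMeasure := by
  have := (intervalIntegrable_iff_integrableOn_Ioc_of_le (by positivity)).1 hf
  exact this.integrable.smul_measure ENNReal.ofReal_ne_top

/-- The Green potential of the uniform measure on a circle is constant on that circle. -/
theorem lintegral_green_circle {ρ : ℝ} (hρ0 : 0 < ρ) (hρ1 : ρ < 1) {z : ℂ} (hz : ‖z‖ = ρ) :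
    ∫⁻ t, greenFnE z (circleMap 0 ρ t) ∂angleMeasure = ENNReal.ofReal (-Real.log ρ) := by
  set f1 : ℂ → ℝ := fun w => Real.log ‖1 - (starRingEnd ℂ) z * w‖
  set f2 : ℂ → ℝ := fun w => Real.log ‖w - z‖
  have hne : ∀ w ∈ Metric.closedBall (0:ℂ) |ρ|, 1 - (starRingEnd ℂ) z * w ≠ 0 := by
    intro w hw h0
    have h1 : ‖(starRingEnd ℂ) z * w‖ = 1 := by rw [← sub_eq_zero.1 h0]; simp
    rw [norm_mul, RCLike.norm_conj, hz] at h1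
    have : ‖w‖ ≤ ρ := by simpa [abs_of_pos hρ0] using hw
    nlinarith [norm_nonneg w]
  have hi1 : CircleIntegrable f1 0 ρ := by
    refine MeromorphicOn.circleIntegrable_log_norm (f := fun w => 1 - (starRingEnd ℂ) z * w) ?_
    intro w _
    fun_prop
  have hi2 : CircleIntegrable f2 0 ρ := circleIntegrable_log_norm_sub_const ρ
  have ha1 : Real.circleAverage f1 0 ρ = 0 := by
    have := AnalyticOnNhd.circleAverage_log_norm_of_ne_zero (R := ρ) (c := 0)
      (g := fun w => 1 - (starRingEnd ℂ) z * w) (fun w _ => by fun_prop) hne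
    simpa using this
  have ha2 : Real.circleAverage f2 0 ρ = Real.log ρ :=
    circleAverage_log_norm_sub_const_of_mem_closedBall (by simp [hz, abs_of_pos hρ0])
  have hI : ∫ t, (f1 (circleMap 0 ρ t) - f2 (circleMap 0 ρ t)) ∂angleMeasure = -Real.log ρ := by
    rw [integral_sub (integrable_angleMeasure hi1) (integrable_angleMeasure hi2),
      integral_angleMeasure, integral_angleMeasure, ha1, ha2, zero_sub]
  have hnull : ∀ᵐ t ∂angleMeasure, circleMap 0 ρ t ≠ z := by
    have h1 : ∀ᵐ t : ℝ, circleMap 0 ρ t ≠ z := by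
      rw [ae_iff]
      have h0 := ((Set.countable_singleton z).preimage_circleMap 0 hρ0.ne').measure_zero volume
      simp only [ne_eq, not_not]
      exact h0
    exact Measure.ae_smul_measure (ae_restrict_of_ae h1) _
  have hw : ∀ t, ‖circleMap 0 ρ t‖ = ρ := fun t => by simp [abs_of_pos hρ0]
  have hnn : ∀ᵐ t ∂angleMeasure, 0 ≤ f1 (circleMap 0 ρ t) - f2 (circleMap 0 ρ t) := by
    filter_upwards [hnull] with t ht
    have h2 : 0 < ‖circleMap 0 ρ t - z‖ := norm_pos_iff.2 (sub_ne_zero.2 ht)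
    refine sub_nonneg.2 (Real.log_le_log h2 ?_)
    have := norm_sub_le_green (ρ := 1) one_pos ((hw t).le.trans hρ1.le) (hz.le.trans hρ1.le)
    simpa using this
  have hi : Integrable (fun t => f1 (circleMap 0 ρ t) - f2 (circleMap 0 ρ t)) angleMeasure :=
    (integrable_angleMeasure hi1).sub (integrable_angleMeasure hi2)
  rw [← hI, ofReal_integral_eq_lintegral_ofReal hi hnn]
  refine lintegral_congr_ae (hnull.mono fun t ht => ?_)
  have h1 : ‖1 - (starRingEnd ℂ) z * circleMap 0 ρ t‖ ≠ 0 :=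
    norm_ne_zero_iff.2 (hne _ (by simp [abs_of_pos hρ0]))
  have h2 : ‖circleMap 0 ρ t - z‖ ≠ 0 := norm_ne_zero_iff.2 (sub_ne_zero.2 ht)
  have h3 : ‖1 - (starRingEnd ℂ) (circleMap 0 ρ t) * z‖ = ‖1 - (starRingEnd ℂ) z * circleMap 0 ρ t‖ := by
    rw [← RCLike.norm_conj]
    simp [mul_comm]
  simp only [greenFnE, if_neg ht.symm, f1, f2, norm_div]
  rw [h3, norm_sub_rev z, Real.log_div h1 h2]

/-- Upper bound for `V` of a set containing the pseudo-hyperbolic circle of centre `α` and radius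
`ρ`: the test measure is the image of the uniform measure on the circle of radius `ρ`. -/
theorem greenV_le {K : Set ℂ} {α : ℂ} (hα : ‖α‖ < 1) {ρ : ℝ} (hρ0 : 0 < ρ) (hρ1 : ρ < 1)
    (hK : ∀ u : ℂ, ‖u‖ = ρ → psi α u ∈ K) :
    greenV K ≤ ENNReal.ofReal (-Real.log ρ) := by
  have hw : ∀ t, ‖circleMap 0 ρ t‖ = ρ := fun t => by simp [abs_of_pos hρ0]
  set γ : ℝ → ℂ := fun t => psi α (circleMap 0 ρ t)
  have hγ : Measurable γ := (measurable_psi α).comp (continuous_circleMap 0 ρ).measurable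
  have hcs : IsCompact (psi α '' Metric.sphere 0 ρ) := by
    refine (isCompact_sphere _ _).image_of_continuousOn fun u hu => ?_
    have : ‖u‖ = ρ := by simpa using hu
    exact (differentiableAt_psi hα (this.le.trans hρ1.le)).continuousAt.continuousWithinAt
  refine iInf_le_of_le (angleMeasure.map γ) (iInf_le_of_le
    (Measure.isProbabilityMeasure_map hγ.aemeasurable) (iInf_le_of_le
      ⟨psi α '' Metric.sphere 0 ρ, ?_, hcs, ?_⟩ ?_))
  · rintro _ ⟨u, hu, rfl⟩
    exact hK u (by simpa using hu)
  · rw [Measure.map_apply hγ hcs.measurableSet.compl]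
    convert measure_empty (μ := angleMeasure)
    ext t
    simp only [Set.mem_preimage, Set.mem_compl_iff, Set.mem_empty_iff_false, iff_false, not_not]
    exact ⟨circleMap 0 ρ t, by simp [abs_of_pos hρ0], rfl⟩
  · have hm := measurable_greenFnE
    rw [greenEnergy, lintegral_map (Measurable.lintegral_prod_right' hm) hγ]
    have : ∀ t, ∫⁻ w, greenFnE (γ t) w ∂(angleMeasure.map γ) = ENNReal.ofReal (-Real.log ρ) := by
      intro t
      have hmt : Measurable (fun w => greenFnE (γ t) w) := hm.comp measurable_prodMk_left
      rw [lintegral_map hmt hγ, ← lintegral_green_circle hρ0 hρ1 (hw t)]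
      refine lintegral_congr fun s => ?_
      exact greenFnE_psi hα ((hw t).le.trans hρ1.le) ((hw s).le.trans hρ1.le)
    simp [this]

theorem greenV_singleton (p : ℂ) : greenV {p} = ⊤ := by
  refine top_le_iff.1 (le_iInf fun μ => le_iInf fun hμ => le_iInf fun ⟨K', hK'K, _, hK'0⟩ => ?_)
  have hae : ∀ᵐ z ∂μ, z = p := by
    have : ∀ᵐ z ∂μ, z ∈ K' := by
      rw [ae_iff]; exact hK'0
    exact this.mono fun z hz => by simpa using hK'K hz
  have h1 : greenEnergy μ = ∫⁻ z, ∫⁻ w, ⊤ ∂μ ∂μ := by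
    refine lintegral_congr_ae (hae.mono fun z hz => ?_)
    refine lintegral_congr_ae (hae.mono fun w hw => ?_)
    simp [greenFnE, hz, hw]
  rw [h1]
  simp

end Green

/-! ### Approximation numbers of composition operators -/

section Operator

/-- Geometric bounds with ratios arbitrarily close to `ρ`, up to a factor `n`, determine the limit
of the `n`-th roots. -/
theorem tendsto_root {a : ℕ → ℝ} {ρ : ℝ} (hρ : 0 < ρ)
    (hlow : ∀ ρ', 0 < ρ' → ρ' < ρ → ∃ c > 0, ∀ n : ℕ, 1 ≤ n → c * ρ' ^ n / n ≤ a n)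
    (hup : ∀ ρ', ρ < ρ' → ∃ C > 0, ∀ n : ℕ, 1 ≤ n → a n ≤ C * ρ' ^ n) :
    Tendsto (fun n : ℕ => a n ^ ((n : ℝ)⁻¹)) atTop (nhds ρ) := by
  have hinv : Tendsto (fun n : ℕ => ((n : ℝ)⁻¹)) atTop (nhds 0) :=
    tendsto_inv_atTop_zero.comp tendsto_natCast_atTop_atTop
  have hc : ∀ c : ℝ, 0 < c → Tendsto (fun n : ℕ => c ^ ((n : ℝ)⁻¹)) atTop (nhds 1) := by
    intro c hc
    have := (Real.continuousAt_const_rpow (b := 0) hc.ne').tendsto.comp hinv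
    simpa [Function.comp_def] using this
  have hn : Tendsto (fun n : ℕ => (n : ℝ) ^ ((n : ℝ)⁻¹)) atTop (nhds 1) := by
    have := tendsto_rpow_div.comp (tendsto_natCast_atTop_atTop (R := ℝ))
    simpa [Function.comp_def] using this
  obtain ⟨c0, hc0, hc0n⟩ := hlow (ρ / 2) (by positivity) (by linarith)
  have ha0 : ∀ n : ℕ, 1 ≤ n → 0 ≤ a n := fun n h => le_trans (by positivity) (hc0n n h)
  rw [tendsto_order]
  constructor
  · intro x hx
    obtain ⟨ρ', h1, h2⟩ := exists_between (max_lt hx hρ)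
    have hρ' : 0 < ρ' := (le_max_right _ _).trans_lt h1
    obtain ⟨c, hc', hcn⟩ := hlow ρ' hρ' h2
    have hlim : Tendsto (fun n : ℕ => c ^ ((n : ℝ)⁻¹) * ρ' / (n : ℝ) ^ ((n : ℝ)⁻¹)) atTop
        (nhds ρ') := by
      have h3 := ((hc c hc').mul_const ρ').div hn one_ne_zero
      rw [one_mul, div_one] at h3
      exact h3
    filter_upwards [hlim.eventually (lt_mem_nhds ((le_max_left _ _).trans_lt h1)),
      eventually_ge_atTop 1] with n hxn hn1
    refine hxn.trans_le ?_
    have h3 := Real.rpow_le_rpow (by positivity) (hcn n hn1) (inv_nonneg.2 (Nat.cast_nonneg n))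
    rw [Real.div_rpow (by positivity) (by positivity), Real.mul_rpow hc'.le (by positivity),
      Real.pow_rpow_inv_natCast hρ'.le (by omega)] at h3
    exact h3
  · intro x hx
    obtain ⟨ρ', h1, h2⟩ := exists_between hx
    have hρ' : 0 < ρ' := hρ.trans h1
    obtain ⟨c, hc', hcn⟩ := hup ρ' h1
    have hlim : Tendsto (fun n : ℕ => c ^ ((n : ℝ)⁻¹) * ρ') atTop (nhds ρ') := by
      simpa using (hc c hc').mul_const ρ'
    filter_upwards [hlim.eventually (gt_mem_nhds h2), eventually_ge_atTop 1] with n hxn hn1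
    refine lt_of_le_of_lt ?_ hxn
    have h3 := Real.rpow_le_rpow (ha0 n hn1) (hcn n hn1) (inv_nonneg.2 (Nat.cast_nonneg n))
    rwa [Real.mul_rpow hc'.le (by positivity),
      Real.pow_rpow_inv_natCast hρ'.le (by omega)] at h3

theorem approxNumber_le {E F : Type*} [NormedAddCommGroup E] [NormedAddCommGroup F]
    [NormedSpace ℂ E] [NormedSpace ℂ F] (T : E →L[ℂ] F) (n : ℕ) (R : E →L[ℂ] F)
    (hR : Module.rank ℂ (LinearMap.range (R : E →ₗ[ℂ] F)) < (n : Cardinal)) :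
    approxNumber T n ≤ ‖T - R‖ :=
  csInf_le ⟨0, by rintro _ ⟨R, -, rfl⟩; exact norm_nonneg _⟩ ⟨R, hR, rfl⟩

theorem rank_range_zero_lt {E F : Type*} [NormedAddCommGroup E] [NormedAddCommGroup F]
    [NormedSpace ℂ E] [NormedSpace ℂ F] {n : ℕ} (hn : 1 ≤ n) :
    Module.rank ℂ (LinearMap.range ((0 : E →L[ℂ] F) : E →ₗ[ℂ] F)) < (n : Cardinal) := by
  have h : LinearMap.range ((0 : E →L[ℂ] F) : E →ₗ[ℂ] F) = ⊥ := by
    rw [ContinuousLinearMap.toLinearMap_zero, LinearMap.range_zero]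
  rw [h, rank_bot]
  exact_mod_cast hn

theorem norm_le_of_bound {H : Type} [NormedAddCommGroup H] [InnerProductSpace ℂ H]
    {ι : H →ₗ[ℂ] (ℂ → ℂ)} (hι_mem : ∀ g : H, memH2 (ι g))
    (hι_norm : ∀ g : H, ‖g‖ ^ 2 = h2NormSq (ι g)) {f : H} {M : ℝ} (hM : 0 ≤ M)
    (hb : ∀ z : ℂ, ‖z‖ < 1 → ‖ι f z‖ ≤ M) : ‖f‖ ≤ M := by
  have h := (memH2_of_bound hM (hι_mem f).1 hb).2
  rw [← hι_norm] at h
  exact le_of_sq_le_sq h hM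

/-- If `φ ∘ R = psi α (ρ ·)` for some `R` mapping the disk into a smaller disk, then `a_n` is at
least a multiple of `ρ ^ n / n`. On the span of the first `n` powers of `psi (-α)`, composition
with `φ` followed by composition with `R` multiplies the coefficients by `ρ ^ k`; an operator of
rank less than `n` vanishes at a nonzero vector of this span. -/
theorem approxNumber_lower {H : Type} [NormedAddCommGroup H] [InnerProductSpace ℂ H]
    (ι : H →ₗ[ℂ] (ℂ → ℂ)) (hι_mem : ∀ g : H, memH2 (ι g))
    (hι_norm : ∀ g : H, ‖g‖ ^ 2 = h2NormSq (ι g))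
    (hι_surj : ∀ f : ℂ → ℂ, memH2 f → ∃ g : H, ∀ z ∈ unitDisk, ι g z = f z)
    {φ : ℂ → ℂ} (T : H →L[ℂ] H) (hT : ∀ g : H, ∀ z ∈ unitDisk, ι (T g) z = ι g (φ z))
    {ρ s : ℝ} {α : ℂ} (hρ0 : 0 < ρ) (hρ1 : ρ < 1) (hα : ‖α‖ < 1) (hs1 : s < 1)
    {R : ℂ → ℂ} (hR : ∀ z, ‖z‖ < 1 → ‖R z‖ ≤ s)
    (hφ : ∀ z, ‖z‖ < 1 → φ (R z) = psi α (ρ * z)) (n : ℕ) (hn : 1 ≤ n) :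
    (1 - s) * ρ ^ n / n ≤ approxNumber T n := by
  have hα' : ‖-α‖ < 1 := by simpa using hα
  have hex : ∀ k : ℕ, ∃ g : H, ∀ z ∈ unitDisk, ι g z = (psi (-α) z) ^ k := by
    intro k
    refine hι_surj _ (memH2_of_bound zero_le_one ?_ ?_).1
    · intro z hz
      exact ((differentiableAt_psi hα' (le_of_lt hz)).pow k).differentiableWithinAt
    · intro z hz
      rw [norm_pow]
      exact pow_le_one₀ (norm_nonneg _) (norm_psi_lt hα' hz).le
  choose e he using hex
  refine le_csInf ⟨‖T - 0‖, 0, rank_range_zero_lt hn, rfl⟩ ?_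
  rintro _ ⟨R', hR', rfl⟩
  set L : (Fin n → ℂ) →ₗ[ℂ] H := Fintype.linearCombination ℂ (fun k : Fin n => e k)
  -- A linear map from `ℂⁿ` into the range of `R'`, of dimension less than `n`, has a kernel.
  have hker : ∃ c : Fin n → ℂ, c ≠ 0 ∧ R' (L c) = 0 := by
    set G := ((R' : H →ₗ[ℂ] H).rangeRestrict).comp L
    by_contra! hcon
    have hinj : Function.Injective G := by
      refine (injective_iff_map_eq_zero G).2 fun c hc => ?_
      by_contra hc0
      exact hcon c hc0 (congrArg Subtype.val hc)
    have h1 := LinearMap.rank_le_of_injective G hinj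
    rw [rank_fin_fun] at h1
    exact absurd hR' (not_lt.2 h1)
  obtain ⟨c, hc0, hc⟩ := hker
  have hcpos : 0 < ‖c‖ := norm_pos_iff.2 hc0
  have hn0 : (0 : ℝ) < n := by exact_mod_cast hn
  have hιf : ∀ z ∈ unitDisk, ι (L c) z = ∑ k : Fin n, c k * (psi (-α) z) ^ (k : ℕ) := by
    intro z hz
    simp only [L, Fintype.linearCombination_apply, map_sum, map_smul, Finset.sum_apply,
      Pi.smul_apply, smul_eq_mul, he _ z hz]
  have hf : ‖L c‖ ≤ n * ‖c‖ := by
    refine norm_le_of_bound hι_mem hι_norm (by positivity) fun z hz => ?_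
    rw [hιf z hz]
    refine (norm_sum_le _ _).trans ?_
    have : ∀ k ∈ (Finset.univ : Finset (Fin n)), ‖c k * (psi (-α) z) ^ (k : ℕ)‖ ≤ ‖c‖ := by
      intro k _
      rw [norm_mul, norm_pow]
      exact mul_le_of_le_one_right (norm_nonneg _)
        (pow_le_one₀ (norm_nonneg _) (norm_psi_lt hα' hz).le) |>.trans (norm_le_pi_norm c k)
    refine (Finset.sum_le_card_nsmul _ _ _ this).trans ?_
    simp
  have hTf : ‖T (L c)‖ ≤ ‖T - R'‖ * (n * ‖c‖) := by
    have h1 : T (L c) = (T - R') (L c) := by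
      rw [_root_.sub_apply, hc, sub_zero]
    rw [h1]
    exact ((T - R').le_opNorm _).trans (by gcongr)
  have hs : 0 < 1 - s := by linarith
  set N := ‖T (L c)‖ / (1 - s) with hN
  have hN0 : 0 ≤ N := by positivity
  have hbd : ∀ k : Fin n, ‖c k‖ * ρ ^ (k : ℕ) ≤ N := by
    intro k
    set A : ℕ → ℂ := fun j => if h : j < n then c ⟨j, h⟩ * (ρ : ℂ) ^ j else 0 with hA
    have h1 := sum_sq_le (f := fun z => ι (T (L c)) (R z)) (a := A) hN0 (fun z hz => ?_)
      (fun z hz => norm_le_of_memH2 (hι_mem _) (norm_nonneg _) (hι_norm _).ge hs1 (hR z hz)) n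
    · have h2 : ‖A k‖ ^ 2 ≤ N ^ 2 :=
        (Finset.single_le_sum (f := fun j => ‖A j‖ ^ 2) (fun j _ => sq_nonneg _)
          (Finset.mem_range.2 k.2)).trans h1
      have h3 := le_of_sq_le_sq h2 hN0
      rw [hA] at h3
      simpa [abs_of_pos hρ0] using h3
    · have hz1 : ‖(ρ : ℂ) * z‖ < 1 := by
        rw [norm_mul, Complex.norm_real, Real.norm_eq_abs, abs_of_pos hρ0]
        nlinarith [norm_nonneg z]
      have hval : ι (T (L c)) (R z) = ∑ j ∈ Finset.range n, A j * z ^ j := by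
        rw [hT _ _ (show R z ∈ unitDisk from (hR z hz).trans_lt hs1), hφ z hz,
          hιf _ (show psi α (ρ * z) ∈ unitDisk from norm_psi_lt hα hz1),
          psi_neg_psi hα hz1.le, Finset.sum_range]
        refine Finset.sum_congr rfl fun j _ => ?_
        simp only [hA, j.2, dif_pos, Fin.eta, mul_pow]
        ring
      change HasSum _ (ι (T (L c)) (R z))
      rw [hval]
      refine hasSum_sum_of_ne_finset_zero fun j hj => ?_
      have : ¬ j < n := by simpa using hj
      simp [hA, this]
  have hfin : ‖c‖ ≤ N / ρ ^ n := by
    refine (pi_norm_le_iff_of_nonneg (by positivity)).2 fun k => ?_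
    rw [le_div_iff₀ (by positivity)]
    refine le_trans ?_ (hbd k)
    exact mul_le_mul_of_nonneg_left (pow_le_pow_of_le_one hρ0.le hρ1.le k.2.le) (norm_nonneg _)
  rw [le_div_iff₀ (by positivity), hN, le_div_iff₀ hs] at hfin
  rw [div_le_iff₀ hn0]
  have h5 : ‖c‖ * ((1 - s) * ρ ^ n) ≤ ‖c‖ * (‖T - R'‖ * n) := by
    calc _ = ‖c‖ * ρ ^ n * (1 - s) := by ring
      _ ≤ _ := hfin
      _ ≤ _ := hTf
      _ = _ := by ring
  exact le_of_mul_le_mul_left h5 hcpos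

/-- If `φ` maps into the pseudo-hyperbolic disk of centre `α` and radius `ρ`, then `a_n` decays
like `(ρ / s) ^ n` for every `s` in `(ρ, 1)`. With `σ = psi (-α) ∘ φ`, one has
`f ∘ φ = ∑ F_k σ ^ k`, where the `F_k` are the Taylor coefficients of `f ∘ psi α`; truncating the
series leaves a uniformly small remainder. The comparison operator is the orthogonal projection
onto the span of the first `n - 1` powers of `σ`, composed with `T`. -/
theorem approxNumber_upper {H : Type} [NormedAddCommGroup H] [InnerProductSpace ℂ H]
    (ι : H →ₗ[ℂ] (ℂ → ℂ)) (hι_mem : ∀ g : H, memH2 (ι g))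
    (hι_norm : ∀ g : H, ‖g‖ ^ 2 = h2NormSq (ι g))
    (hι_surj : ∀ f : ℂ → ℂ, memH2 f → ∃ g : H, ∀ z ∈ unitDisk, ι g z = f z)
    {φ : ℂ → ℂ} (T : H →L[ℂ] H) (hT : ∀ g : H, ∀ z ∈ unitDisk, ι (T g) z = ι g (φ z))
    {ρ s : ℝ} {α : ℂ} (hρ0 : 0 < ρ) (hρs : ρ < s) (hs1 : s < 1) (hα : ‖α‖ < 1)
    (hφd : ∀ z, ‖z‖ < 1 → DifferentiableAt ℂ φ z) (hφ1 : ∀ z, ‖z‖ < 1 → ‖φ z‖ < 1)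
    (hσ : ∀ z, ‖z‖ < 1 → ‖psi (-α) (φ z)‖ ≤ ρ) :
    ∃ C > 0, ∀ n : ℕ, 1 ≤ n → approxNumber T n ≤ C * (ρ / s) ^ n := by
  have hα' : ‖-α‖ < 1 := by simpa using hα
  have hs0 : 0 < s := hρ0.trans hρs
  have hex : ∀ k : ℕ, ∃ g : H, ∀ z ∈ unitDisk, ι g z = (psi (-α) (φ z)) ^ k := by
    intro k
    refine hι_surj _ (memH2_of_bound zero_le_one ?_ ?_).1
    · intro z hz
      exact (((differentiableAt_psi hα' (hφ1 z hz).le).comp z (hφd z hz)).pow k).differentiableWithinAt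
    · intro z hz
      rw [norm_pow]
      exact pow_le_one₀ (norm_nonneg _) (norm_psi_lt hα' (hφ1 z hz)).le
  choose e he using hex
  obtain ⟨t, ht1, ht⟩ : ∃ t < 1, ∀ z : ℂ, ‖z‖ ≤ s → ‖psi α z‖ ≤ t := by
    have hcont : ContinuousOn (fun z => ‖psi α z‖) (Metric.closedBall 0 s) := fun z hz =>
      (differentiableAt_psi hα ((mem_closedBall_zero_iff.1 hz).trans
        hs1.le)).continuousAt.norm.continuousWithinAt
    obtain ⟨z0, hz0, hmax⟩ := (isCompact_closedBall (0 : ℂ) s).exists_isMaxOn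
      ⟨0, by simpa using hs0.le⟩ hcont
    exact ⟨‖psi α z0‖, norm_psi_lt hα ((mem_closedBall_zero_iff.1 hz0).trans_lt hs1),
      fun z hz => hmax (mem_closedBall_zero_iff.2 hz)⟩
  have ht' : 0 < 1 - t := by linarith
  set q := ρ / s with hq
  have hq0 : 0 < q := by positivity
  have hq1 : q < 1 := by rw [hq, div_lt_one hs0]; exact hρs
  have hq' : 0 < 1 - q := by linarith
  have hFd : ∀ f : H, DifferentiableOn ℂ (fun z => ι f (psi α z)) unitDisk := by
    intro f z hz
    have h1 : DifferentiableAt ℂ (ι f) (psi α z) := by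
      refine (hι_mem f).1.differentiableAt ?_
      rw [unitDisk_eq_ball]
      exact Metric.isOpen_ball.mem_nhds (by simpa using norm_psi_lt hα hz)
    exact (h1.comp z (differentiableAt_psi hα (le_of_lt hz))).differentiableWithinAt
  -- Cauchy estimates for `f ∘ psi α` on the disk of radius `s`.
  have hcoef : ∀ f : H, ∀ k, ‖taylorCoeff (fun z => ι f (psi α z)) k‖ * s ^ k ≤
      ‖f‖ / (1 - t) := by
    intro f k
    have hN0 : 0 ≤ ‖f‖ / (1 - t) := by positivity
    have h1 := sum_sq_le (f := fun z => ι f (psi α (s * z)))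
      (a := fun k => taylorCoeff (fun z => ι f (psi α z)) k * (s : ℂ) ^ k) hN0
      (fun z hz => ?_) (fun z hz => ?_) (k + 1)
    · have h2 := (Finset.single_le_sum
        (f := fun j => ‖taylorCoeff (fun z => ι f (psi α z)) j * (s : ℂ) ^ j‖ ^ 2)
        (fun j _ => sq_nonneg _) (Finset.self_mem_range_succ k)).trans h1
      have h3 := le_of_sq_le_sq h2 hN0
      simpa [abs_of_pos hs0] using h3
    · have hz1 : ‖(s : ℂ) * z‖ < 1 := by
        rw [norm_mul, Complex.norm_real, Real.norm_eq_abs, abs_of_pos hs0]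
        nlinarith [norm_nonneg z]
      have h4 := hasSum_taylorCoeff (hFd f) hz1
      simpa [mul_pow, mul_assoc] using h4
    · refine norm_le_of_memH2 (hι_mem _) (norm_nonneg _) (hι_norm _).ge ht1 (ht _ ?_)
      rw [norm_mul, Complex.norm_real, Real.norm_eq_abs, abs_of_pos hs0]
      nlinarith [norm_nonneg z]
  refine ⟨1 / ((1 - t) * (1 - q) * q), by positivity, fun n hn => ?_⟩
  set S : Submodule ℂ H := Submodule.span ℂ (Set.range fun k : Fin (n - 1) => e k) with hS
  have : FiniteDimensional ℂ S := FiniteDimensional.span_of_finite ℂ (Set.finite_range _)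
  have hrank : Module.rank ℂ (LinearMap.range ((S.starProjection ∘L T : H →L[ℂ] H) :
      H →ₗ[ℂ] H)) < (n : Cardinal) := by
    have h1 : LinearMap.range ((S.starProjection ∘L T : H →L[ℂ] H) : H →ₗ[ℂ] H) ≤ S := by
      rintro _ ⟨x, rfl⟩
      exact Submodule.starProjection_apply_mem S (T x)
    refine (Submodule.rank_mono h1).trans_lt ?_
    rw [← Module.finrank_eq_rank]
    have h2 : Module.finrank ℂ S ≤ n - 1 := by
      have h3 := finrank_range_le_card (R := ℂ) (fun k : Fin (n - 1) => e k)
      rwa [Fintype.card_fin] at h3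
    exact_mod_cast (show Module.finrank ℂ S < n by omega)
  refine (approxNumber_le T n _ hrank).trans ?_
  refine ContinuousLinearMap.opNorm_le_bound _ (by positivity) fun f => ?_
  set F : ℕ → ℂ := fun k => taylorCoeff (fun z => ι f (psi α z)) k with hF
  set p : H := ∑ k ∈ Finset.range (n - 1), F k • e k with hp
  have hpS : p ∈ S := by
    refine Submodule.sum_mem _ fun k hk => Submodule.smul_mem _ _ (Submodule.subset_span ?_)
    exact ⟨⟨k, Finset.mem_range.1 hk⟩, rfl⟩
  have hmin : ‖(T - S.starProjection ∘L T) f‖ ≤ ‖T f - p‖ := by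
    rw [_root_.sub_apply, ContinuousLinearMap.comp_apply,
      Submodule.starProjection_minimal]
    exact ciInf_le ⟨0, by rintro _ ⟨x, rfl⟩; exact norm_nonneg _⟩ (⟨p, hpS⟩ : S)
  refine hmin.trans ?_
  refine norm_le_of_bound hι_mem hι_norm (by positivity) fun z hz => ?_
  have hφz := hφ1 z hz
  have hσ1 := norm_psi_lt hα' hφz
  have hsum : HasSum (fun k => F k * (psi (-α) (φ z)) ^ k) (ι (T f) z) := by
    have h1 := hasSum_taylorCoeff (hFd f) hσ1
    have h2 := psi_neg_psi hα' hφz.le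
    rw [neg_neg] at h2
    simp only [h2] at h1
    rw [hT f z hz]
    exact h1
  have hιp : ι p z = ∑ k ∈ Finset.range (n - 1), F k * (psi (-α) (φ z)) ^ k := by
    simp only [hp, map_sum, map_smul, Finset.sum_apply, Pi.smul_apply, smul_eq_mul, he _ z hz]
  have htail := (hasSum_nat_add_iff' (n - 1)).2 hsum
  have hval : ι (T f - p) z = ∑' k, F (k + (n - 1)) * (psi (-α) (φ z)) ^ (k + (n - 1)) := by
    rw [htail.tsum_eq, map_sub, Pi.sub_apply, hιp]
  rw [hval]
  have hg := (hasSum_geometric_of_lt_one hq0.le hq1).mul_left (‖f‖ / (1 - t) * q ^ (n - 1))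
  have hle := tsum_of_norm_bounded (f := fun k => F (k + (n - 1)) *
    (psi (-α) (φ z)) ^ (k + (n - 1))) hg (fun k => ?_)
  · refine hle.trans (le_of_eq ?_)
    have : q ^ n = q ^ (n - 1) * q := by rw [← pow_succ, Nat.sub_add_cancel hn]
    rw [this]
    field_simp
  · rw [norm_mul, norm_pow]
    have h1 := hcoef f (k + (n - 1))
    calc ‖F (k + (n - 1))‖ * ‖psi (-α) (φ z)‖ ^ (k + (n - 1))
        ≤ ‖F (k + (n - 1))‖ * ρ ^ (k + (n - 1)) := by gcongr; exact hσ z hz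
      _ = ‖F (k + (n - 1))‖ * s ^ (k + (n - 1)) * q ^ (k + (n - 1)) := by
          rw [mul_assoc, ← mul_pow, hq, mul_div_cancel₀ _ hs0.ne']
      _ ≤ ‖f‖ / (1 - t) * q ^ (k + (n - 1)) := by gcongr
      _ = _ := by rw [pow_add]; ring

end Operator

/-! ### Fractional linear symbols -/

section FractionalLinear

theorem norm_num_le_den {a b c d : ℂ}
    (h_in : ‖a‖ ^ 2 + ‖b‖ ^ 2 + 2 * ‖(starRingEnd ℂ) a * b - (starRingEnd ℂ) c * d‖
      ≤ ‖c‖ ^ 2 + ‖d‖ ^ 2) {z : ℂ} (hz : ‖z‖ = 1) : ‖a * z + b‖ ≤ ‖c * z + d‖ := by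
  have hz2 : Complex.normSq z = 1 := by rw [Complex.normSq_eq_norm_sq, hz, one_pow]
  have h1 := Complex.re_le_norm
    (((starRingEnd ℂ) a * b - (starRingEnd ℂ) c * d) * (starRingEnd ℂ) z)
  rw [norm_mul, RCLike.norm_conj, hz, mul_one] at h1
  have key : ∀ a b : ℂ, ‖a * z + b‖ ^ 2 =
      ‖a‖ ^ 2 + ‖b‖ ^ 2 + 2 * ((starRingEnd ℂ) a * b * (starRingEnd ℂ) z).re := by
    intro a b
    simp only [← Complex.normSq_eq_norm_sq]
    rw [Complex.normSq_add, Complex.normSq_mul, hz2, mul_one]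
    congr 2
    rw [← Complex.conj_re]
    simp only [map_mul, Complex.conj_conj]
    congr 1
    ring
  refine le_of_sq_le_sq ?_ (norm_nonneg _)
  rw [key, key]
  rw [sub_mul, Complex.sub_re] at h1
  linarith

theorem den_identity (c d z : ℂ) :
    ‖c * z + d‖ ^ 2 - ‖(starRingEnd ℂ) d * z + (starRingEnd ℂ) c‖ ^ 2 =
      (‖d‖ ^ 2 - ‖c‖ ^ 2) * (1 - ‖z‖ ^ 2) := by
  simp only [← Complex.normSq_eq_norm_sq, Complex.normSq_apply, Complex.add_re, Complex.add_im,
    Complex.mul_re, Complex.mul_im, Complex.conj_re, Complex.conj_im]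
  ring

theorem den_ne_zero {c d z : ℂ} (h : ‖c‖ < ‖d‖) (hz : ‖z‖ ≤ 1) : c * z + d ≠ 0 := by
  intro h0
  have h1 : ‖d‖ = ‖c‖ * ‖z‖ := by
    rw [← norm_mul, ← norm_neg (c * z), ← eq_neg_of_add_eq_zero_right h0]
  nlinarith [norm_nonneg c]

/-- When the map is nonconstant, its pole is not on the unit circle. -/
theorem norm_c_lt {a b c d : ℂ} (h_in : ‖a‖ ^ 2 + ‖b‖ ^ 2 +
      2 * ‖(starRingEnd ℂ) a * b - (starRingEnd ℂ) c * d‖ ≤ ‖c‖ ^ 2 + ‖d‖ ^ 2)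
    (h_cd : ‖c‖ ≤ ‖d‖) (hΔ : a * d - b * c ≠ 0) : ‖c‖ < ‖d‖ := by
  refine lt_of_le_of_ne h_cd fun heq => hΔ ?_
  by_cases hc : c = 0
  · have hd : d = 0 := by
      rw [hc, norm_zero] at heq
      exact norm_eq_zero.1 heq.symm
    simp [hc, hd]
  have hz : ‖-d / c‖ = 1 := by
    rw [norm_div, norm_neg, ← heq, div_self (norm_ne_zero_iff.2 hc)]
  have h1 := norm_num_le_den h_in hz
  have h2 : c * (-d / c) + d = 0 := by field_simp; ring
  rw [h2, norm_zero, norm_le_zero_iff] at h1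
  field_simp at h1
  linear_combination -h1

/-- A nonconstant symbol maps the unit disk bijectively onto a Euclidean disk `ball C r`, with
continuous inverse `χ`. -/
theorem frac_geom {a b c d : ℂ} (h_in : ‖a‖ ^ 2 + ‖b‖ ^ 2 +
      2 * ‖(starRingEnd ℂ) a * b - (starRingEnd ℂ) c * d‖ ≤ ‖c‖ ^ 2 + ‖d‖ ^ 2)
    (h_lt : ‖c‖ < ‖d‖) (hΔ : a * d - b * c ≠ 0) :
    ∃ (C : ℂ) (r : ℝ) (χ : ℂ → ℂ), 0 < r ∧ ‖C‖ + r ≤ 1 ∧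
      (∀ z, ‖z‖ < 1 → (a * z + b) / (c * z + d) ∈ Metric.ball C r) ∧
      ContinuousOn χ (Metric.ball C r) ∧
      ∀ w ∈ Metric.ball C r, ‖χ w‖ < 1 ∧ (a * χ w + b) / (c * χ w + d) = w := by
  set Δ := a * d - b * c with hΔdef
  set E : ℝ := ‖d‖ ^ 2 - ‖c‖ ^ 2 with hE
  have hE0 : 0 < E := by have := norm_nonneg c; rw [hE]; nlinarith
  have hEc : (E : ℂ) = d * (starRingEnd ℂ) d - c * (starRingEnd ℂ) c := by
    rw [Complex.mul_conj, Complex.mul_conj, Complex.normSq_eq_norm_sq, Complex.normSq_eq_norm_sq,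
      hE]
    push_cast
    rfl
  have hEc0 : (E : ℂ) ≠ 0 := by exact_mod_cast hE0.ne'
  set C : ℂ := (b * (starRingEnd ℂ) d - a * (starRingEnd ℂ) c) / E with hC
  set r : ℝ := ‖Δ‖ / E with hr
  have hr0 : 0 < r := div_pos (norm_pos_iff.2 hΔ) hE0
  -- The symbol is a disk automorphism followed by an affine map.
  have hφ : ∀ z, ‖z‖ ≤ 1 → (a * z + b) / (c * z + d) =
      C + Δ / E * (((starRingEnd ℂ) d * z + (starRingEnd ℂ) c) / (c * z + d)) := by
    intro z hz
    have hne := den_ne_zero h_lt hz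
    rw [div_eq_iff hne, add_mul, mul_assoc, div_mul_cancel₀ _ hne, hC]
    field_simp
    rw [hEc, hΔdef]
    ring
  have hlt : ‖-c‖ < ‖(starRingEnd ℂ) d‖ := by simpa using h_lt
  set χ0 : ℂ → ℂ := fun u => (d * u - (starRingEnd ℂ) c) / (-c * u + (starRingEnd ℂ) d) with hχ0
  have hχ1 : ∀ u, ‖u‖ ≤ 1 → ‖χ0 u‖ ≤ 1 ∧ (‖u‖ < 1 → ‖χ0 u‖ < 1) ∧ (‖u‖ = 1 → ‖χ0 u‖ = 1) := by
    intro u hu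
    have hne := norm_pos_iff.2 (den_ne_zero hlt hu)
    have hid := den_identity (-c) ((starRingEnd ℂ) d) u
    simp only [Complex.conj_conj, map_neg, RCLike.norm_conj, norm_neg, ← sub_eq_add_neg] at hid
    rw [← hE] at hid
    simp only [hχ0, norm_div]
    have h0 := norm_nonneg u
    have h5 := norm_nonneg (d * u - (starRingEnd ℂ) c)
    refine ⟨?_, fun h => ?_, fun h => ?_⟩
    · rw [div_le_one hne]
      refine le_of_sq_le_sq ?_ hne.le
      have : 0 ≤ E * (1 - ‖u‖ ^ 2) := mul_nonneg hE0.le (by nlinarith)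
      linarith
    · rw [div_lt_one hne]
      refine lt_of_pow_lt_pow_left₀ 2 hne.le ?_
      have : 0 < E * (1 - ‖u‖ ^ 2) := mul_pos hE0 (by nlinarith)
      linarith
    · rw [div_eq_one_iff_eq hne.ne']
      rw [h] at hid
      refine (pow_left_inj₀ h5 hne.le two_ne_zero).1 ?_
      linarith
  have hinv : ∀ u, ‖u‖ ≤ 1 → (a * χ0 u + b) / (c * χ0 u + d) = C + Δ / E * u := by
    intro u hu
    rw [hφ _ (hχ1 u hu).1]
    congr 2
    have hne := den_ne_zero hlt hu
    have hne2 := den_ne_zero h_lt (hχ1 u hu).1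
    rw [div_eq_iff hne2]
    have hmul : χ0 u * (-c * u + (starRingEnd ℂ) d) = d * u - (starRingEnd ℂ) c :=
      div_mul_cancel₀ _ hne
    have h3 : c * χ0 u + d = E / (-c * u + (starRingEnd ℂ) d) := by
      rw [eq_div_iff hne, hEc]
      linear_combination c * hmul
    have h4 : (starRingEnd ℂ) d * χ0 u + (starRingEnd ℂ) c =
        u * E / (-c * u + (starRingEnd ℂ) d) := by
      rw [eq_div_iff hne, hEc]
      linear_combination (starRingEnd ℂ) d * hmul
    rw [h3, h4, mul_div_assoc]
  have hcoef : ‖Δ / (E : ℂ)‖ = r := by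
    rw [norm_div, Complex.norm_real, Real.norm_eq_abs, abs_of_pos hE0]
  refine ⟨C, r, fun w => χ0 ((w - C) * (E / Δ)), hr0, ?_, ?_, ?_, ?_⟩
  -- The point of `closedBall C r` of largest modulus is the image of a point of the unit circle.
  · obtain ⟨v, hv1, hv⟩ : ∃ v : ℂ, ‖v‖ = 1 ∧ ‖C + r * v‖ = ‖C‖ + r := by
      by_cases h0 : C = 0
      · exact ⟨1, by simp, by simp [h0, abs_of_pos hr0]⟩
      · have hn := norm_ne_zero_iff.2 h0
        refine ⟨C / ‖C‖, by simp [hn], ?_⟩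
        have : C + r * (C / ‖C‖) = ((1 + r / ‖C‖ : ℝ) : ℂ) * C := by push_cast; ring
        rw [this, norm_mul, Complex.norm_real, Real.norm_eq_abs, abs_of_pos (by positivity)]
        field_simp
    set u : ℂ := r * v / (Δ / E) with hu
    have hΔE : Δ / (E : ℂ) ≠ 0 := div_ne_zero hΔ hEc0
    have hu1 : ‖u‖ = 1 := by
      rw [hu, norm_div, norm_mul, hv1, hcoef, Complex.norm_real, Real.norm_eq_abs, abs_of_pos hr0,
        mul_one, div_self hr0.ne']
    have h1 := hinv u hu1.le
    rw [hu, mul_div_cancel₀ _ hΔE, ← hu] at h1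
    rw [← hv, ← h1, norm_div]
    exact div_le_one_of_le₀ (norm_num_le_den h_in ((hχ1 u hu1.le).2.2 hu1)) (norm_nonneg _)
  · intro z hz
    have hne := norm_pos_iff.2 (den_ne_zero h_lt hz.le)
    rw [hφ z hz.le, mem_ball_iff_norm, add_sub_cancel_left, norm_mul, hcoef]
    refine mul_lt_of_lt_one_right hr0 ?_
    rw [norm_div, div_lt_one hne]
    refine lt_of_pow_lt_pow_left₀ 2 hne.le ?_
    have hid := den_identity c d z
    have : 0 < E * (1 - ‖z‖ ^ 2) := mul_pos hE0 (by nlinarith [norm_nonneg z])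
    linarith
  all_goals
    have hu : ∀ w ∈ Metric.ball C r, ‖(w - C) * (E / Δ)‖ < 1 := by
      intro w hw
      have h1 := mem_ball_iff_norm.1 hw
      rw [← inv_div, ← div_eq_mul_inv, norm_div, hcoef, div_lt_one hr0]
      exact h1
  · intro w hw
    have hne := den_ne_zero hlt (hu w hw).le
    refine ContinuousAt.continuousWithinAt ?_
    simp only [hχ0]
    exact ContinuousAt.div (by fun_prop) (by fun_prop) hne
  · intro w hw
    refine ⟨(hχ1 _ (hu w hw).le).2.1 (hu w hw), ?_⟩
    rw [hinv _ (hu w hw).le]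
    field_simp
    ring

theorem expNegV_eq {K : Set ℂ} {ρ : ℝ} (hρ0 : 0 < ρ) (hρ1 : ρ ≤ 1)
    (h : greenV K = ENNReal.ofReal (-Real.log ρ)) : expNegV K = ρ := by
  rw [expNegV, h, if_neg ENNReal.ofReal_ne_top, ENNReal.toReal_ofReal, neg_neg, Real.exp_log hρ0]
  linarith [Real.log_nonpos hρ0.le hρ1]

/-- Upper bound for `V` obtained by letting the radius of the test circles increase to `ρ`. -/
theorem greenV_le_of_forall {K : Set ℂ} {ρ : ℝ} (hρ0 : 0 < ρ) (hρ1 : ρ ≤ 1)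
    (hK : ∀ ρ', 0 < ρ' → ρ' < ρ → ∃ α : ℂ, ‖α‖ < 1 ∧ ∀ u : ℂ, ‖u‖ = ρ' → psi α u ∈ K) :
    greenV K ≤ ENNReal.ofReal (-Real.log ρ) := by
  have hlim : Tendsto (fun R : ℝ => ENNReal.ofReal (-Real.log R)) (nhdsWithin ρ (Set.Iio ρ))
      (nhds (ENNReal.ofReal (-Real.log ρ))) := by
    refine (ENNReal.tendsto_ofReal ?_).mono_left nhdsWithin_le_nhds
    exact (Real.continuousAt_log hρ0.ne').neg.tendsto
  refine ge_of_tendsto hlim ?_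
  filter_upwards [Ioo_mem_nhdsLT hρ0] with R hR
  obtain ⟨α, hα, h⟩ := hK R hR.1 hR.2
  exact greenV_le hα hR.1 (hR.2.trans_le hρ1) h

/-- The hypotheses of `approxNumber_lower` hold with `R = χ ∘ psi α (ρ' ·)` as soon as the range
of `φ` contains a slightly larger pseudo-hyperbolic disk; compactness gives the bound on `R`. -/
theorem approxNumber_lower_of_disk {H : Type} [NormedAddCommGroup H] [InnerProductSpace ℂ H]
    (ι : H →ₗ[ℂ] (ℂ → ℂ)) (hι_mem : ∀ g : H, memH2 (ι g))
    (hι_norm : ∀ g : H, ‖g‖ ^ 2 = h2NormSq (ι g))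
    (hι_surj : ∀ f : ℂ → ℂ, memH2 f → ∃ g : H, ∀ z ∈ unitDisk, ι g z = f z)
    {φ χ : ℂ → ℂ} (T : H →L[ℂ] H) (hT : ∀ g : H, ∀ z ∈ unitDisk, ι (T g) z = ι g (φ z))
    {U : Set ℂ} (hχc : ContinuousOn χ U) (hχ : ∀ w ∈ U, ‖χ w‖ < 1 ∧ φ (χ w) = w)
    {ρ' ρ : ℝ} {α : ℂ} (hρ0 : 0 < ρ') (hρ : ρ' < ρ) (hρ1 : ρ ≤ 1) (hα : ‖α‖ < 1)
    (hU : ∀ u, ‖u‖ < ρ → psi α u ∈ U) :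
    ∃ c > 0, ∀ n : ℕ, 1 ≤ n → c * ρ' ^ n / n ≤ approxNumber T n := by
  have hcont : ContinuousOn (fun u => ‖χ (psi α u)‖) (Metric.closedBall 0 ρ') := by
    refine (hχc.comp (fun u hu => ?_) fun u hu => ?_).norm
    · exact (differentiableAt_psi hα ((mem_closedBall_zero_iff.1 hu).trans
        (hρ.le.trans hρ1))).continuousAt.continuousWithinAt
    · exact hU u ((mem_closedBall_zero_iff.1 hu).trans_lt hρ)
  obtain ⟨u0, hu0, hmax⟩ := (isCompact_closedBall (0 : ℂ) ρ').exists_isMaxOn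
    ⟨0, by simpa using hρ0.le⟩ hcont
  have hs : ‖χ (psi α u0)‖ < 1 := (hχ _ (hU u0 ((mem_closedBall_zero_iff.1 hu0).trans_lt hρ))).1
  refine ⟨1 - ‖χ (psi α u0)‖, by linarith, fun n hn => ?_⟩
  have hz : ∀ z : ℂ, ‖z‖ < 1 → ‖(ρ' : ℂ) * z‖ ≤ ρ' := by
    intro z hz
    rw [norm_mul, Complex.norm_real, Real.norm_eq_abs, abs_of_pos hρ0]
    exact mul_le_of_le_one_right hρ0.le hz.le
  exact approxNumber_lower ι hι_mem hι_norm hι_surj T hT hρ0 (hρ.trans_le hρ1) hα hs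
    (R := fun z => χ (psi α (ρ' * z)))
    (fun z h => hmax (mem_closedBall_zero_iff.2 (hz z h)))
    (fun z h => (hχ _ (hU _ ((hz z h).trans_lt hρ))).2) n hn

/-- A constant symbol `p` gives an operator of rank at most one. The point `p` may lie on the unit
circle, where `ι g p` is merely the value given by `ι`; linearity is all that matters. -/
theorem tendsto_of_degenerate {H : Type} [NormedAddCommGroup H] [InnerProductSpace ℂ H]
    (ι : H →ₗ[ℂ] (ℂ → ℂ))
    (hι_surj : ∀ f : ℂ → ℂ, memH2 f → ∃ g : H, ∀ z ∈ unitDisk, ι g z = f z)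
    (hι_inj : ∀ g : H, (∀ z ∈ unitDisk, ι g z = 0) → g = 0)
    (p : ℂ) (T : H →L[ℂ] H) (hT : ∀ g : H, ∀ z ∈ unitDisk, ι (T g) z = ι g p) :
    Tendsto (fun n : ℕ => approxNumber T n ^ ((n : ℝ)⁻¹)) atTop (nhds 0) := by
  obtain ⟨e, he⟩ := hι_surj (fun _ => 1) (memH2_of_bound (M := 1) zero_le_one
    (differentiableOn_const _) fun z _ => by simp).1
  have hTe : ∀ g, T g = ι g p • e := by
    intro g
    refine sub_eq_zero.1 (hι_inj _ fun z hz => ?_)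
    simp [hT g z hz, he z hz]
  have hzero : ∀ n : ℕ, 2 ≤ n → approxNumber T n = 0 := by
    intro n hn
    refine le_antisymm ?_ (Real.sInf_nonneg (by rintro _ ⟨R, -, rfl⟩; exact norm_nonneg _))
    refine (approxNumber_le T n T ?_).trans (by simp)
    have h1 : LinearMap.range (T : H →ₗ[ℂ] H) ≤ Submodule.span ℂ {e} := by
      rintro _ ⟨g, rfl⟩
      exact Submodule.mem_span_singleton.2 ⟨ι g p, (hTe g).symm⟩
    refine (Submodule.rank_mono h1).trans_lt ((rank_span_le _).trans_lt ?_)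
    rw [Cardinal.mk_singleton]
    exact_mod_cast hn
  refine tendsto_const_nhds.congr' ?_
  filter_upwards [eventually_ge_atTop 2] with n hn
  have : ((n : ℝ)⁻¹) ≠ 0 := inv_ne_zero (by exact_mod_cast (by omega : n ≠ 0))
  rw [hzero n hn, Real.zero_rpow this]

end FractionalLinear

/-- For a fractional linear symbol `φ(z) = (az+b)/(cz+d)` mapping the unit
disk into itself (i.e. `|a|²+|b|²+2|āb - c̄d| ≤ |c|²+|d|²` and `|c| ≤ |d|`), the approximation
numbers of `C_φ` on `H²` satisfy `lim aₙ(C_φ)^{1/n} = e^{-1/capa(K)}`, `K = closure (φ(D))`. -/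
theorem beta_eq_expNegV_fractional_linear_H2
    (H : Type) [NormedAddCommGroup H] [InnerProductSpace ℂ H] [CompleteSpace H]
    (ι : H →ₗ[ℂ] (ℂ → ℂ))
    (hι_mem : ∀ g : H, memH2 (ι g))
    (hι_norm : ∀ g : H, ‖g‖ ^ 2 = h2NormSq (ι g))
    (hι_surj : ∀ f : ℂ → ℂ, memH2 f → ∃ g : H, ∀ z ∈ unitDisk, ι g z = f z)
    (hι_inj : ∀ g : H, (∀ z ∈ unitDisk, ι g z = 0) → g = 0)
    (a b c d : ℂ) (hcd0 : ¬(c = 0 ∧ d = 0))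
    (h_in : ‖a‖ ^ 2 + ‖b‖ ^ 2 + 2 * ‖(starRingEnd ℂ) a * b - (starRingEnd ℂ) c * d‖
      ≤ ‖c‖ ^ 2 + ‖d‖ ^ 2)
    (h_cd : ‖c‖ ≤ ‖d‖)
    (Cφ : H →L[ℂ] H)
    (hCφ : ∀ g : H, ∀ z ∈ unitDisk, ι (Cφ g) z = ι g ((a * z + b) / (c * z + d))) :
    Filter.Tendsto (fun n : ℕ => approxNumber Cφ n ^ ((n : ℝ)⁻¹)) Filter.atTop
      (nhds (expNegV (closure ((fun z : ℂ => (a * z + b) / (c * z + d)) '' unitDisk)))) := by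
  -- If `ad = bc`, the symbol is the constant `b / d`, and both sides are `0`.
  by_cases hΔ : a * d - b * c = 0
  · have hd : d ≠ 0 := by
      intro h0
      rw [h0, norm_zero, norm_le_zero_iff] at h_cd
      exact hcd0 ⟨h_cd, h0⟩
    have hconst : ∀ z ∈ unitDisk, (a * z + b) / (c * z + d) = b / d := by
      intro z hz
      have hne : c * z + d ≠ 0 := by
        intro h0
        have h1 : ‖d‖ = ‖c‖ * ‖z‖ := by
          rw [← norm_mul, ← norm_neg (c * z), ← eq_neg_of_add_eq_zero_right h0]
        have h2 : 0 < ‖d‖ := norm_pos_iff.2 hd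
        have h3 : ‖z‖ < 1 := hz
        nlinarith [mul_le_mul_of_nonneg_right h_cd (norm_nonneg z), mul_pos h2 (sub_pos.2 h3)]
      rw [div_eq_div_iff hne hd]
      linear_combination z * hΔ
    have himg : (fun z : ℂ => (a * z + b) / (c * z + d)) '' unitDisk = {b / d} := by
      ext w
      constructor
      · rintro ⟨z, hz, rfl⟩
        exact hconst z hz
      · rintro rfl
        have h0 : (0 : ℂ) ∈ unitDisk := by simp [unitDisk]
        exact ⟨0, h0, hconst 0 h0⟩
    rw [himg, closure_singleton, expNegV, if_pos (greenV_singleton _)]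
    exact tendsto_of_degenerate ι hι_surj hι_inj (b / d) Cφ fun g z hz => by
      rw [hCφ g z hz, hconst z hz]
  have h_lt := norm_c_lt h_in h_cd hΔ
  obtain ⟨C, r, χ, hr, hCr, hφ, hχc, hχ⟩ := frac_geom h_in h_lt hΔ
  have himg : (fun z : ℂ => (a * z + b) / (c * z + d)) '' unitDisk = Metric.ball C r := by
    ext w
    constructor
    · rintro ⟨z, hz, rfl⟩
      exact hφ z hz
    · intro hw
      exact ⟨χ w, (hχ w hw).1, (hχ w hw).2⟩
  rw [himg, closure_ball C hr.ne']
  have hlow : ∀ (ρ ρ' : ℝ) (α : ℂ), 0 < ρ' → ρ' < ρ → ρ ≤ 1 → ‖α‖ < 1 →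
      (∀ u, ‖u‖ < ρ → psi α u ∈ Metric.ball C r) →
      ∃ c > 0, ∀ n : ℕ, 1 ≤ n → c * ρ' ^ n / n ≤ approxNumber Cφ n :=
    fun ρ ρ' α h1 h2 h3 h4 h5 => approxNumber_lower_of_disk
      (φ := fun z => (a * z + b) / (c * z + d)) ι hι_mem hι_norm hι_surj Cφ hCφ hχc hχ h1 h2 h3 h4 h5
  rcases hCr.lt_or_eq with hCr | hCr
  -- The closed image lies inside the unit disk.
  · obtain ⟨ρ, α, hρ0, hρ1, hα, hin, hout⟩ := geom_interior hr hCr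
    have hK1 : ∀ z ∈ Metric.closedBall C r, ‖z‖ ≤ 1 := by
      intro z hz
      have h1 := mem_closedBall_iff_norm.1 hz
      have h2 := norm_sub_norm_le z C
      linarith
    rw [expNegV_eq hρ0 hρ1.le (le_antisymm (greenV_le_of_forall hρ0 hρ1.le fun ρ' _ h2 =>
      ⟨α, hα, fun u hu => Metric.ball_subset_closedBall (hin u (hu.trans_lt h2))⟩)
      (greenV_ge hα hρ0 hρ1 hK1 hout))]
    refine tendsto_root hρ0 (fun ρ' h1 h2 => hlow ρ ρ' α h1 h2 hρ1.le hα hin) fun ρ' hρ' => ?_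
    have hρ'0 : 0 < ρ' := hρ0.trans hρ'
    obtain ⟨s, hs, hs1⟩ := exists_between (max_lt hρ1 ((div_lt_one hρ'0).2 hρ'))
    have hs0 : 0 < s := hρ0.trans ((le_max_left _ _).trans_lt hs)
    have hq : ρ / s ≤ ρ' := by
      have := (le_max_right _ _).trans_lt hs
      rw [div_lt_iff₀ hρ'0] at this
      rw [div_le_iff₀ hs0]
      linarith
    obtain ⟨M, hM, hMn⟩ := approxNumber_upper (φ := fun z => (a * z + b) / (c * z + d))
      ι hι_mem hι_norm hι_surj Cφ hCφ hρ0 ((le_max_left _ _).trans_lt hs) hs1 hα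
      (fun z hz => by
        have hne := den_ne_zero h_lt hz.le
        exact DifferentiableAt.div (by fun_prop) (by fun_prop) hne)
      (fun z hz => by
        have h1 := mem_ball_iff_norm.1 (hφ z hz)
        have h2 := norm_sub_norm_le ((a * z + b) / (c * z + d)) C
        change ‖(a * z + b) / (c * z + d)‖ < 1
        linarith)
      (fun z hz => hout _ (Metric.ball_subset_closedBall (hφ z hz)))
    refine ⟨M, hM, fun n hn => (hMn n hn).trans ?_⟩
    have hq0 : 0 ≤ ρ / s := by positivity
    gcongr
  -- The image is tangent to the unit circle: `V` vanishes and the limit is `1`.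
  · have hexα : ∀ ρ', 0 < ρ' → ρ' < 1 → ∃ (ρ : ℝ) (α : ℂ), ρ' < ρ ∧ ρ < 1 ∧ ‖α‖ < 1 ∧
        ∀ u, ‖u‖ < ρ → psi α u ∈ Metric.ball C r := by
      intro ρ' h1 h2
      obtain ⟨ρ, h3, h4⟩ := exists_between h2
      obtain ⟨α, hα, h5⟩ := geom_boundary hr hCr (h1.trans h3) h4
      exact ⟨ρ, α, h3, h4, hα, h5⟩
    have hV : greenV (Metric.closedBall C r) = ENNReal.ofReal (-Real.log 1) := by
      refine le_antisymm (greenV_le_of_forall one_pos le_rfl fun ρ' h1 h2 => ?_) (by simp)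
      obtain ⟨ρ, α, h3, _, hα, h5⟩ := hexα ρ' h1 h2
      exact ⟨α, hα, fun u hu => Metric.ball_subset_closedBall (h5 u (hu.trans_lt h3))⟩
    rw [expNegV_eq one_pos le_rfl hV]
    refine tendsto_root one_pos (fun ρ' h1 h2 => ?_) fun ρ' hρ' =>
      ⟨‖Cφ‖ + 1, by positivity, fun n hn => ?_⟩
    · obtain ⟨ρ, α, h3, h4, hα, h5⟩ := hexα ρ' h1 h2
      exact hlow ρ ρ' α h1 h3 h4.le hα h5
    · have h1 := approxNumber_le Cφ n 0 (rank_range_zero_lt hn)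
      rw [sub_zero] at h1
      have h2 : 1 ≤ ρ' ^ n := one_le_pow₀ hρ'.le
      nlinarith [norm_nonneg Cφ]

end
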